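/- arXiv:1809.08206 — 12 statements merged into one kernel-verified Lean document; each statement's English description precedes it below -/
import Mathlib

section
/- Let x_1 < x_2 < ... < x_N (N > 2) be real numbers, I = [x_1, x_N], and for i = 1,...,N−1 let L_i : I → [x_i, x_{i+1}] be the affine map with L_i(x_1) = x_i, L_i(x_N) = x_{i+1}. Let F_i : I × ℝ → ℝ be continuous maps with F_i(x_1, y_1) = y_i, F_i(x_N, y_N) = y_{i+1}, and |F_i(x,y) − F_i(x,y*)| ≤ r_i |y − y*| for all x ∈ I and y, y* ∈ ℝ, where 0 < r_i < 1. Then the Read–Bajraktarević operator T, defined on the set G = {h ∈ C(I,ℝ) : h(x_1) = y_1, h(x_N) = y_N} by (Th)(x) = F_i(L_i^{-1}(x), h(L_i^{-1}(x))) for x ∈ [x_i, x_{i+1}], maps G into G and is a contraction with respect to the supremum metric with contraction factor r* = max{r_i : 1 ≤ i ≤ N−1} < 1. -/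
/-- The Read–Bajraktarević operator `T` maps the space
`G = {h ∈ C(I,ℝ) : h(x₁) = y₁, h(x_N) = y_N}` into itself and is a contraction
with respect to the supremum metric, with contraction factor
`r* = max{rᵢ : 1 ≤ i ≤ N-1} < 1`. -/
theorem stmt_0
    (N : ℕ) (hN : 2 < N)
    (x y : ℕ → ℝ)
    (hx : ∀ i, 1 ≤ i → i < N → x i < x (i + 1))
    (L : ℕ → ℝ → ℝ)
    (hL : ∀ i, 1 ≤ i → i < N → ∀ t : ℝ, L i t =
      ((x (i + 1) - x i) / (x N - x 1)) * t
        + (x N * x i - x 1 * x (i + 1)) / (x N - x 1))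
    (F : ℕ → ℝ → ℝ → ℝ) (r : ℕ → ℝ)
    (hFcont : ∀ i, 1 ≤ i → i < N → Continuous (fun p : ℝ × ℝ => F i p.1 p.2))
    (hF1 : ∀ i, 1 ≤ i → i < N → F i (x 1) (y 1) = y i)
    (hFN : ∀ i, 1 ≤ i → i < N → F i (x N) (y N) = y (i + 1))
    (hr : ∀ i, 1 ≤ i → i < N → 0 < r i ∧ r i < 1)
    (hLip : ∀ i, 1 ≤ i → i < N → ∀ t ∈ Set.Icc (x 1) (x N), ∀ z z' : ℝ,
      |F i t z - F i t z'| ≤ r i * |z - z'|)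
    (rstar : ℝ)
    (hrstar : IsGreatest {s : ℝ | ∃ i, 1 ≤ i ∧ i < N ∧ s = r i} rstar)
    (T : (ℝ → ℝ) → (ℝ → ℝ))
    (hT : ∀ g : ℝ → ℝ, ContinuousOn g (Set.Icc (x 1) (x N)) →
      g (x 1) = y 1 → g (x N) = y N →
      ∀ i, 1 ≤ i → i < N → ∀ t ∈ Set.Icc (x 1) (x N),
        T g (L i t) = F i t (g t)) :
    -- T maps G into G:
    (∀ g : ℝ → ℝ, ContinuousOn g (Set.Icc (x 1) (x N)) →
        g (x 1) = y 1 → g (x N) = y N →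
      ContinuousOn (T g) (Set.Icc (x 1) (x N)) ∧
        T g (x 1) = y 1 ∧ T g (x N) = y N) ∧
    -- the contraction factor is < 1:
    rstar < 1 ∧
    -- T is a contraction with factor r* for the sup metric:
    (∀ g₁ g₂ : ℝ → ℝ,
      ContinuousOn g₁ (Set.Icc (x 1) (x N)) → g₁ (x 1) = y 1 → g₁ (x N) = y N →
      ContinuousOn g₂ (Set.Icc (x 1) (x N)) → g₂ (x 1) = y 1 → g₂ (x N) = y N →
      ∀ t ∈ Set.Icc (x 1) (x N),
        |T g₁ t - T g₂ t| ≤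
          rstar * sSup ((fun s => |g₁ s - g₂ s|) '' Set.Icc (x 1) (x N))) := by
  have hmono : ∀ k, 1 ≤ k → k ≤ N → x 1 ≤ x k := by
    intro k hk
    induction k, hk using Nat.le_induction with
    | base => intro _; exact le_rfl
    | succ k hk ih =>
      intro h
      exact (ih (by omega)).trans (hx k hk (by omega)).le
  have h1N : x 1 < x N := by
    have h := hmono (N - 1) (by omega) (by omega)
    have h' := hx (N - 1) (by omega) (by omega)
    rw [Nat.sub_add_cancel (by omega)] at h'
    linarith
  have hd : 0 < x N - x 1 := by linarith
  -- explicit inverse of L i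
  have hinv : ∀ i, 1 ≤ i → i < N → ∀ t ∈ Set.Icc (x i) (x (i + 1)),
      (x 1 + (t - x i) / (x (i + 1) - x i) * (x N - x 1)) ∈ Set.Icc (x 1) (x N) ∧
      L i (x 1 + (t - x i) / (x (i + 1) - x i) * (x N - x 1)) = t := by
    intro i hi hiN t ht
    have hdi : 0 < x (i + 1) - x i := by linarith [hx i hi hiN]
    have h0 : 0 ≤ (t - x i) / (x (i + 1) - x i) := div_nonneg (by linarith [ht.1]) hdi.le
    have h1 : (t - x i) / (x (i + 1) - x i) ≤ 1 := by
      rw [div_le_one hdi]; linarith [ht.2]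
    refine ⟨⟨?_, ?_⟩, ?_⟩
    · nlinarith
    · nlinarith
    · rw [hL i hi hiN]
      have := hd.ne'
      have := hdi.ne'
      field_simp
      ring
  have hL1 : ∀ i, 1 ≤ i → i < N → L i (x 1) = x i := by
    intro i hi hiN
    rw [hL i hi hiN]
    have := hd.ne'
    field_simp
    ring
  have hLN : ∀ i, 1 ≤ i → i < N → L i (x N) = x (i + 1) := by
    intro i hi hiN
    rw [hL i hi hiN]
    have := hd.ne'
    field_simp
    ring
  have hcov : ∀ k, 1 ≤ k → k < N → ∀ t ∈ Set.Icc (x 1) (x (k + 1)),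
      ∃ i, 1 ≤ i ∧ i < N ∧ t ∈ Set.Icc (x i) (x (i + 1)) := by
    intro k hk
    induction k, hk using Nat.le_induction with
    | base => intro h t ht; exact ⟨1, le_rfl, h, ht⟩
    | succ k hk ih =>
      intro h t ht
      rcases le_total t (x (k + 1)) with h' | h'
      · exact ih (by omega) t ⟨ht.1, h'⟩
      · exact ⟨k + 1, by omega, h, h', ht.2⟩
  have hrlt : rstar < 1 := by
    obtain ⟨i, hi, hiN, h⟩ := hrstar.1
    rw [h]; exact (hr i hi hiN).2
  refine ⟨?_, hrlt, ?_⟩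
  · intro g hg hg1 hgN
    have hpiece : ∀ i, 1 ≤ i → i < N → ContinuousOn (T g) (Set.Icc (x i) (x (i + 1))) := by
      intro i hi hiN
      have hs : ContinuousOn (fun t => x 1 + (t - x i) / (x (i + 1) - x i) * (x N - x 1))
          (Set.Icc (x i) (x (i + 1))) := by
        apply Continuous.continuousOn
        fun_prop
      have hgs := hg.comp hs (fun t ht => (hinv i hi hiN t ht).1)
      have hc := (hFcont i hi hiN).comp_continuousOn (hs.prodMk hgs)
      refine hc.congr ?_
      intro t ht
      obtain ⟨h1, h2⟩ := hinv i hi hiN t ht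
      have := hT g hg hg1 hgN i hi hiN _ h1
      rw [h2] at this
      exact this
    have hall : ∀ k, 1 ≤ k → k < N → ContinuousOn (T g) (Set.Icc (x 1) (x (k + 1))) := by
      intro k hk
      induction k, hk using Nat.le_induction with
      | base => intro h; exact hpiece 1 le_rfl h
      | succ k hk ih =>
        intro h
        rw [← Set.Icc_union_Icc_eq_Icc (hmono (k + 1) (by omega) (by omega))
          (hx (k + 1) (by omega) h).le]
        exact (ih (by omega)).union_of_isClosed (hpiece (k + 1) (by omega) h)
          isClosed_Icc isClosed_Icc
    refine ⟨?_, ?_, ?_⟩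
    · have := hall (N - 1) (by omega) (by omega)
      rwa [Nat.sub_add_cancel (by omega)] at this
    · have := hT g hg hg1 hgN 1 le_rfl (by omega) (x 1) ⟨le_rfl, h1N.le⟩
      rwa [hL1 1 le_rfl (by omega), hg1, hF1 1 le_rfl (by omega)] at this
    · have := hT g hg hg1 hgN (N - 1) (by omega) (by omega) (x N) ⟨h1N.le, le_rfl⟩
      rwa [hLN (N - 1) (by omega) (by omega), hgN, hFN (N - 1) (by omega) (by omega),
        Nat.sub_add_cancel (by omega)] at this
  · intro g₁ g₂ h1 h11 h1N' h2 h21 h2N t ht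
    obtain ⟨i, hi, hiN, hti⟩ := hcov (N - 1) (by omega) (by omega) t
      (by rwa [Nat.sub_add_cancel (by omega)])
    obtain ⟨hs, hLs⟩ := hinv i hi hiN t hti
    generalize x 1 + (t - x i) / (x (i + 1) - x i) * (x N - x 1) = s at hs hLs
    rw [← hLs, hT g₁ h1 h11 h1N' i hi hiN s hs, hT g₂ h2 h21 h2N i hi hiN s hs]
    have hbdd : BddAbove ((fun s => |g₁ s - g₂ s|) '' Set.Icc (x 1) (x N)) :=
      (isCompact_Icc.image_of_continuousOn (h1.sub h2).abs).bddAbove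
    have hle : |g₁ s - g₂ s| ≤ sSup ((fun s => |g₁ s - g₂ s|) '' Set.Icc (x 1) (x N)) :=
      le_csSup hbdd ⟨s, hs, rfl⟩
    have hri : r i ≤ rstar := hrstar.2 ⟨i, hi, hiN, rfl⟩
    have hr0 := (hr i hi hiN).1
    calc _ ≤ r i * |g₁ s - g₂ s| := hLip i hi hiN s hs _ _
      _ ≤ _ := mul_le_mul hri hle (abs_nonneg _) (by linarith)
end

section
/- Let x_1 < x_2 < ... < x_N (N > 2), I = [x_1, x_N], L_i : I → [x_i, x_{i+1}] the affine maps with L_i(x_1) = x_i, L_i(x_N) = x_{i+1}, and F_i : I × ℝ → ℝ continuous with F_i(x_1, y_1) = y_i, F_i(x_N, y_N) = y_{i+1} and |F_i(x,y) − F_i(x,y*)| ≤ r_i |y − y*| with 0 < r_i < 1. Then there exists a unique continuous function g : I → ℝ such that g(x_i) = y_i for all i = 1,...,N and g satisfies the self-referential functional equation g(L_i(x)) = F_i(x, g(x)) for all x ∈ I and all i = 1,...,N−1. -/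
/-- Existence and uniqueness of the fractal interpolation function:
there is a unique continuous `g : I → ℝ` with `g(xᵢ) = yᵢ` for all `i` and
`g(Lᵢ(x)) = Fᵢ(x, g(x))` for all `x ∈ I` and `i = 1,…,N-1`. -/
theorem stmt_1
    (N : ℕ) (hN : 2 < N)
    (x y : ℕ → ℝ)
    (hx : ∀ i, 1 ≤ i → i < N → x i < x (i + 1))
    (L : ℕ → ℝ → ℝ)
    (hL : ∀ i, 1 ≤ i → i < N → ∀ t : ℝ, L i t =
      ((x (i + 1) - x i) / (x N - x 1)) * t
        + (x N * x i - x 1 * x (i + 1)) / (x N - x 1))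
    (F : ℕ → ℝ → ℝ → ℝ) (r : ℕ → ℝ)
    (hFcont : ∀ i, 1 ≤ i → i < N → Continuous (fun p : ℝ × ℝ => F i p.1 p.2))
    (hF1 : ∀ i, 1 ≤ i → i < N → F i (x 1) (y 1) = y i)
    (hFN : ∀ i, 1 ≤ i → i < N → F i (x N) (y N) = y (i + 1))
    (hr : ∀ i, 1 ≤ i → i < N → 0 < r i ∧ r i < 1)
    (hLip : ∀ i, 1 ≤ i → i < N → ∀ t ∈ Set.Icc (x 1) (x N), ∀ z z' : ℝ,
      |F i t z - F i t z'| ≤ r i * |z - z'|) :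
    ∃ g : ℝ → ℝ,
      (ContinuousOn g (Set.Icc (x 1) (x N)) ∧
        (∀ i, 1 ≤ i → i ≤ N → g (x i) = y i) ∧
        (∀ i, 1 ≤ i → i < N → ∀ t ∈ Set.Icc (x 1) (x N),
          g (L i t) = F i t (g t))) ∧
      (∀ g' : ℝ → ℝ,
        ContinuousOn g' (Set.Icc (x 1) (x N)) →
        (∀ i, 1 ≤ i → i ≤ N → g' (x i) = y i) →
        (∀ i, 1 ≤ i → i < N → ∀ t ∈ Set.Icc (x 1) (x N),
          g' (L i t) = F i t (g' t)) →
        Set.EqOn g' g (Set.Icc (x 1) (x N))) := by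
  classical
  have mono : ∀ i, 1 ≤ i → ∀ j, i ≤ j → j ≤ N → x i ≤ x j := by
    intro i hi j hij
    induction j, hij using Nat.le_induction with
    | base => intro _; exact le_rfl
    | succ n hn ih =>
      intro h
      exact (ih (by omega)).trans (hx n (by omega) (by omega)).le
  have hab : x 1 < x N :=
    (hx 1 le_rfl (by omega)).trans_le (mono 2 (by omega) N (by omega) le_rfl)
  have cover : ∀ t ∈ Set.Icc (x 1) (x N), ∃ j, 1 ≤ j ∧ j < N ∧ x j ≤ t ∧ t ≤ x (j + 1) := by
    have key : ∀ n, 2 ≤ n → n ≤ N → ∀ t, x 1 ≤ t → t ≤ x n →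
        ∃ j, 1 ≤ j ∧ j < n ∧ x j ≤ t ∧ t ≤ x (j + 1) := by
      intro n hn
      induction n, hn using Nat.le_induction with
      | base => intro _ t h1 h2; exact ⟨1, le_rfl, by omega, h1, h2⟩
      | succ n hn ih =>
        intro hN' t h1 h2
        rcases le_total t (x n) with h | h
        · obtain ⟨j, a, b, c, d⟩ := ih (by omega) t h1 h
          exact ⟨j, a, by omega, c, d⟩
        · exact ⟨n, by omega, by omega, h, h2⟩
    intro t ht
    exact key N (by omega) le_rfl t ht.1 ht.2
  obtain ⟨K, hK0, hK1, hrK⟩ : ∃ K : ℝ, 0 ≤ K ∧ K < 1 ∧ ∀ i, 1 ≤ i → i < N → r i ≤ K := by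
    obtain ⟨m, hm, hmax⟩ := Finset.exists_max_image (Finset.Ico 1 N) r
      ⟨1, by simp; omega⟩
    rw [Finset.mem_Ico] at hm
    exact ⟨r m, (hr m hm.1 hm.2).1.le, (hr m hm.1 hm.2).2,
      fun i h1 h2 => hmax i (Finset.mem_Ico.2 ⟨h1, h2⟩)⟩
  -- inverse of `L i` before projecting
  let u : ℕ → ℝ → ℝ := fun i t => (t - x i) / (x (i + 1) - x i) * (x N - x 1) + x 1
  have hLu : ∀ i, 1 ≤ i → i < N → ∀ t, L i (u i t) = t := by
    intro i h1 h2 t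
    have e1 : x (i + 1) - x i ≠ 0 := (sub_pos.2 (hx i h1 h2)).ne'
    have e2 : x N - x 1 ≠ 0 := (sub_pos.2 hab).ne'
    rw [hL i h1 h2]
    simp only [u]
    field_simp
    ring
  have huL : ∀ i, 1 ≤ i → i < N → ∀ t, u i (L i t) = t := by
    intro i h1 h2 t
    have e1 : x (i + 1) - x i ≠ 0 := (sub_pos.2 (hx i h1 h2)).ne'
    have e2 : x N - x 1 ≠ 0 := (sub_pos.2 hab).ne'
    rw [hL i h1 h2]
    simp only [u]
    field_simp
    ring
  have hu1 : ∀ i, u i (x i) = x 1 := by intro i; simp [u]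
  have hu2 : ∀ i, 1 ≤ i → i < N → u i (x (i + 1)) = x N := by
    intro i h1 h2
    have e1 : x (i + 1) - x i ≠ 0 := (sub_pos.2 (hx i h1 h2)).ne'
    simp [u, div_self e1]
  have humono : ∀ i, 1 ≤ i → i < N → Monotone (u i) := by
    intro i h1 h2 s t hst
    have e1 : 0 < x (i + 1) - x i := (sub_pos.2 (hx i h1 h2))
    have e2 : 0 < x N - x 1 := (sub_pos.2 hab)
    simp only [u]
    gcongr
  have humem : ∀ i, 1 ≤ i → i < N → ∀ t, x i ≤ t → t ≤ x (i + 1) →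
      u i t ∈ Set.Icc (x 1) (x N) := by
    intro i h1 h2 t h3 h4
    exact ⟨(hu1 i) ▸ humono i h1 h2 h3, (hu2 i h1 h2) ▸ humono i h1 h2 h4⟩
  have hLx1 : ∀ i, 1 ≤ i → i < N → L i (x 1) = x i := by
    intro i h1 h2
    rw [← hu1 i, hLu i h1 h2]
  have hLmem : ∀ i, 1 ≤ i → i < N → ∀ t ∈ Set.Icc (x 1) (x N),
      x i ≤ L i t ∧ L i t ≤ x (i + 1) := by
    intro i h1 h2 t ht
    have e1 : 0 < x (i + 1) - x i := (sub_pos.2 (hx i h1 h2))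
    have e2 : 0 < x N - x 1 := (sub_pos.2 hab)
    have hm : Monotone (L i) := by
      intro s t hst
      rw [hL i h1 h2, hL i h1 h2]
      gcongr
    refine ⟨(hLx1 i h1 h2) ▸ hm ht.1, ?_⟩
    have := hm ht.2
    rwa [← hu2 i h1 h2, hLu i h1 h2] at this
  let a : Set.Icc (x 1) (x N) := ⟨x 1, le_rfl, hab.le⟩
  let b : Set.Icc (x 1) (x N) := ⟨x N, hab.le, le_rfl⟩
  let M : ℕ → ℝ → Set.Icc (x 1) (x N) := fun i t => Set.projIcc (x 1) (x N) hab.le (u i t)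
  have hMc : ∀ i, Continuous (M i) := by
    intro i
    refine continuous_projIcc.comp ?_
    simp only [u]
    fun_prop
  let G : ℕ → C(Set.Icc (x 1) (x N), ℝ) → ℝ → ℝ := fun i h t => F i (M i t) (h (M i t))
  have hGc : ∀ i, 1 ≤ i → i < N → ∀ h, Continuous (G i h) := by
    intro i h1 h2 h
    exact (hFcont i h1 h2).comp
      ((continuous_subtype_val.comp (hMc i)).prodMk (h.continuous.comp (hMc i)))
  let T : C(Set.Icc (x 1) (x N), ℝ) → ℝ → ℝ := fun h t =>
    y 1 + ∑ i ∈ Finset.Ico 1 N, (G i h t - y i)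
  have hTc : ∀ h, Continuous (T h) := by
    intro h
    refine continuous_const.add (continuous_finsetSum _ ?_)
    intro i hi
    rw [Finset.mem_Ico] at hi
    exact (hGc i hi.1 hi.2 h).sub continuous_const
  have hGlo : ∀ i, 1 ≤ i → i < N → ∀ h, h a = y 1 → ∀ t, t ≤ x i → G i h t = y i := by
    intro i h1 h2 h ha t ht
    have : M i t = a := Set.projIcc_of_le_left _ ((hu1 i) ▸ humono i h1 h2 ht)
    simp only [G, this, ha]
    exact hF1 i h1 h2
  have hGhi : ∀ i, 1 ≤ i → i < N → ∀ h, h b = y N → ∀ t, x (i + 1) ≤ t →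
      G i h t = y (i + 1) := by
    intro i h1 h2 h hb t ht
    have : M i t = b := Set.projIcc_of_right_le _ ((hu2 i h1 h2) ▸ humono i h1 h2 ht)
    simp only [G, this, hb]
    exact hFN i h1 h2
  have hTG : ∀ h, h a = y 1 → h b = y N → ∀ j, 1 ≤ j → j < N → ∀ t, x j ≤ t → t ≤ x (j + 1) →
      T h t = G j h t := by
    intro h ha hb j hj1 hj2 t ht1 ht2
    have s1 : ∀ n, 1 ≤ n → n ≤ j → y 1 + ∑ i ∈ Finset.Ico 1 n, (G i h t - y i) = y n := by
      intro n hn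
      induction n, hn using Nat.le_induction with
      | base => intro _; simp
      | succ n hn ih =>
        intro hnj
        rw [Finset.sum_Ico_succ_top hn, ← add_assoc, ih (by omega),
          hGhi n hn (by omega) h hb t ((mono (n + 1) (by omega) j hnj hj2.le).trans ht1)]
        ring
    have s2 : ∀ n, j + 1 ≤ n → n ≤ N →
        y 1 + ∑ i ∈ Finset.Ico 1 n, (G i h t - y i) = G j h t := by
      intro n hn
      induction n, hn using Nat.le_induction with
      | base =>
        intro _
        rw [Finset.sum_Ico_succ_top hj1, ← add_assoc, s1 j hj1 le_rfl]
        ring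
      | succ n hn ih =>
        intro hnj
        rw [Finset.sum_Ico_succ_top (by omega), ← add_assoc, ih (by omega),
          hGlo n (by omega) (by omega) h ha t
            (ht2.trans (mono (j + 1) (by omega) n hn (by omega)))]
        ring
    exact s2 N (by omega) le_rfl
  let S : Set C(Set.Icc (x 1) (x N), ℝ) := {h | h a = y 1 ∧ h b = y N}
  have hSc : IsClosed S := by
    refine IsClosed.inter ?_ ?_
    · exact isClosed_eq (continuous_eval_const a) continuous_const
    · exact isClosed_eq (continuous_eval_const b) continuous_const
  have : CompleteSpace S := hSc.completeSpace_coe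
  have hSne : Nonempty S := by
    refine ⟨⟨⟨fun t => y 1 + (t.1 - x 1) / (x N - x 1) * (y N - y 1), by fun_prop⟩, ?_, ?_⟩⟩
    · simp [a]
    · simp [b, div_self (sub_pos.2 hab).ne']
  let Φ : S → S := fun h => ⟨⟨fun t => T h.1 t.1, (hTc h.1).comp continuous_subtype_val⟩, by
    refine ⟨?_, ?_⟩
    · change T h.1 (x 1) = y 1
      rw [hTG h.1 h.2.1 h.2.2 1 le_rfl (by omega) (x 1) le_rfl (hx 1 le_rfl (by omega)).le]
      exact hGlo 1 le_rfl (by omega) h.1 h.2.1 _ le_rfl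
    · change T h.1 (x N) = y N
      obtain ⟨m, rfl⟩ : ∃ m, N = m + 1 := ⟨N - 1, by omega⟩
      rw [hTG h.1 h.2.1 h.2.2 m (by omega) (by omega) (x (m + 1))
        (hx m (by omega) (by omega)).le le_rfl]
      exact hGhi m (by omega) (by omega) h.1 h.2.2 _ le_rfl⟩
  have hΦ : ContractingWith ⟨K, hK0⟩ Φ := by
    refine ⟨by exact_mod_cast hK1, LipschitzWith.of_dist_le_mul ?_⟩
    intro f h
    change dist (Φ f).1 (Φ h).1 ≤ K * dist f.1 h.1
    rw [ContinuousMap.dist_le (by positivity)]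
    intro t
    change dist (T f.1 t.1) (T h.1 t.1) ≤ _
    obtain ⟨j, h1, h2, h3, h4⟩ := cover t.1 t.2
    rw [hTG f.1 f.2.1 f.2.2 j h1 h2 t.1 h3 h4, hTG h.1 h.2.1 h.2.2 j h1 h2 t.1 h3 h4,
      Real.dist_eq]
    refine (hLip j h1 h2 _ (M j t.1).2 _ _).trans ?_
    rw [← Real.dist_eq]
    exact mul_le_mul (hrK j h1 h2) (ContinuousMap.dist_apply_le_dist _) dist_nonneg hK0
  obtain ⟨f, hf⟩ : ∃ f : S, Φ f = f := ⟨hΦ.fixedPoint, hΦ.fixedPoint_isFixedPt⟩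
  have hfT : ∀ t : Set.Icc (x 1) (x N), f.1 t = T f.1 t.1 := by
    intro t
    conv_lhs => rw [← hf]
    rfl
  let g : ℝ → ℝ := Set.IccExtend hab.le f.1
  have hgc : Continuous g := f.1.continuous.Icc_extend'
  have hg : ∀ t (ht : t ∈ Set.Icc (x 1) (x N)), g t = f.1 ⟨t, ht⟩ := fun t ht =>
    Set.IccExtend_of_mem _ _ ht
  have hLI : ∀ i, 1 ≤ i → i < N → ∀ t ∈ Set.Icc (x 1) (x N), L i t ∈ Set.Icc (x 1) (x N) := by
    intro i h1 h2 t ht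
    obtain ⟨h3, h4⟩ := hLmem i h1 h2 t ht
    exact ⟨(mono 1 le_rfl i h1 h2.le).trans h3,
      h4.trans (mono (i + 1) (by omega) N (by omega) le_rfl)⟩
  have hgF : ∀ i, 1 ≤ i → i < N → ∀ t ∈ Set.Icc (x 1) (x N), g (L i t) = F i t (g t) := by
    intro i h1 h2 t ht
    obtain ⟨h3, h4⟩ := hLmem i h1 h2 t ht
    rw [hg _ (hLI i h1 h2 t ht), hfT, hTG f.1 f.2.1 f.2.2 i h1 h2 _ h3 h4, hg t ht]
    have : M i (L i t) = ⟨t, ht⟩ := by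
      simp only [M, huL i h1 h2]
      exact Set.projIcc_of_mem _ ht
    simp only [G, this]
  refine ⟨g, ⟨hgc.continuousOn, ?_, hgF⟩, ?_⟩
  · intro i h1 h2
    rcases h2.lt_or_eq with h | h
    · rw [← hLx1 i h1 h, hgF i h1 h _ a.2, hg _ a.2]
      exact (congrArg (F i (x 1)) f.2.1).trans (hF1 i h1 h)
    · subst h
      rw [hg _ b.2]
      exact f.2.2
  · intro g' hc' _ hF'
    obtain ⟨s, hs, hmax⟩ := isCompact_Icc.exists_isMaxOn (Set.nonempty_Icc.2 hab.le)
      ((hc'.sub hgc.continuousOn).abs)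
    have hmax' : ∀ t ∈ Set.Icc (x 1) (x N), |g' t - g t| ≤ |g' s - g s| := fun t ht => hmax ht
    obtain ⟨j, h1, h2, h3, h4⟩ := cover s hs
    have hv := humem j h1 h2 s h3 h4
    have hle : |g' s - g s| ≤ r j * |g' s - g s| := by
      calc |g' s - g s| = |F j (u j s) (g' (u j s)) - F j (u j s) (g (u j s))| := by
            rw [← hF' j h1 h2 _ hv, ← hgF j h1 h2 _ hv, hLu j h1 h2]
        _ ≤ r j * |g' (u j s) - g (u j s)| := hLip j h1 h2 _ hv _ _
        _ ≤ r j * |g' s - g s| :=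
            mul_le_mul_of_nonneg_left (hmax' _ hv) (hr j h1 h2).1.le
    have hz : |g' s - g s| ≤ 0 := by
      by_contra hcon
      push Not at hcon
      nlinarith [(hr j h1 h2).2]
    intro t ht
    have := abs_nonpos_iff.1 ((hmax' t ht).trans hz)
    linarith
end

section
/- Let x_1 < x_2 < ... < x_N (N > 2), I = [x_1, x_N], a_i = (x_{i+1} − x_i)/(x_N − x_1), and L_i(x) = a_i x + b_i with L_i(x_1) = x_i, L_i(x_N) = x_{i+1}. Let F_i(x,y) = α_i y + q_i(x) where q_i(x) = P_i(x)/Q_i(x) with P_i, Q_i polynomials and Q_i(x) ≠ 0 for all x ∈ I, and suppose that for some integer p ≥ 0 one has |α_i| < a_i^p for all i. Set F_{i,m}(x,y) = (α_i y + q_i^{(m)}(x))/a_i^m, y_{1,m} = q_1^{(m)}(x_1)/(a_1^m − α_1), y_{N,m} = q_{N-1}^{(m)}(x_N)/(a_{N-1}^m − α_{N-1}) for m = 1, ..., p. If F_{i-1,m}(x_N, y_{N,m}) = F_{i,m}(x_1, y_{1,m}) for all i = 2,...,N−1 and m = 1,...,p, then the unique continuous function Ψ : I → ℝ satisfying Ψ(L_i(x))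 = α_i Ψ(x) + q_i(x) is p-times continuously differentiable on I, and for each m = 1,...,p the m-th derivative Ψ^{(m)} is the unique continuous function satisfying Ψ^{(m)}(L_i(x)) = F_{i,m}(x, Ψ^{(m)}(x)) = (α_i Ψ^{(m)}(x) + q_i^{(m)}(x))/a_i^m for all x ∈ I and i = 1,...,N−1. -/
open Set

theorem fif_mono (N : ℕ) (x : ℕ → ℝ) (hx : ∀ i, 1 ≤ i → i < N → x i < x (i + 1))
    (i j : ℕ) (hi : 1 ≤ i) (hij : i ≤ j) (hj : j ≤ N) : x i ≤ x j := by
  induction j, hij using Nat.le_induction with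
  | base => exact le_rfl
  | succ k hk ih =>
    exact (ih (by omega)).trans (hx k (by omega) (by omega)).le

theorem fif_cover (x : ℕ → ℝ) (n : ℕ) (hn : 2 ≤ n) (t : ℝ) (h1 : x 1 ≤ t) (h2 : t ≤ x n) :
    ∃ i, 1 ≤ i ∧ i < n ∧ x i ≤ t ∧ t ≤ x (i + 1) := by
  induction n, hn using Nat.le_induction with
  | base => exact ⟨1, le_rfl, by omega, h1, h2⟩
  | succ k hk ih =>
    rcases le_total t (x k) with h | h
    · obtain ⟨i, a, b, c⟩ := ih h
      exact ⟨i, a, by omega, c⟩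
    · exact ⟨k, by omega, by omega, h, h2⟩

theorem fif_glue (N : ℕ) (x : ℕ → ℝ) (hx : ∀ i, 1 ≤ i → i < N → x i < x (i + 1))
    (h : ℕ → ℝ → ℝ) (hc : ∀ i, Continuous (h i))
    (hj : ∀ i, 1 ≤ i → i + 1 < N → h i (x (i + 1)) = h (i + 1) (x (i + 1)))
    (n : ℕ) (hn : 2 ≤ n) (hnN : n ≤ N) :
    ∃ H : ℝ → ℝ, Continuous H ∧
      ∀ i, 1 ≤ i → i < n → ∀ t ∈ Icc (x i) (x (i + 1)), H t = h i t := by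
  induction n, hn using Nat.le_induction with
  | base =>
    refine ⟨h 1, hc 1, ?_⟩
    intro i h1 h2 t _
    obtain rfl : i = 1 := by omega
    rfl
  | succ k hk ih =>
    obtain ⟨H, Hc, He⟩ := ih (by omega)
    have hk0 : H (x k) = h k (x k) := by
      obtain ⟨j, rfl⟩ : ∃ j, k = j + 1 := ⟨k - 1, by omega⟩
      rw [He j (by omega) (by omega) (x (j + 1)) ⟨(hx j (by omega) (by omega)).le, le_rfl⟩]
      exact hj j (by omega) (by omega)
    refine ⟨fun t => if t ≤ x k then H t else h k t, ?_, ?_⟩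
    · refine Continuous.if_le Hc (hc k) continuous_id continuous_const ?_
      intro t ht
      rw [ht, hk0]
    · intro i h1 h2 t ht
      rcases Nat.lt_succ_iff_lt_or_eq.mp h2 with h3 | rfl
      · have : t ≤ x k := ht.2.trans (fif_mono N x hx (i + 1) k (by omega) (by omega) (by omega))
        simp only [this, if_true]
        exact He i h1 h3 t ht
      · by_cases h4 : t ≤ x i
        · have : t = x i := le_antisymm h4 ht.1
          subst this
          simp [hk0]
        · simp [h4]

/-- uniqueness for the homogeneous equation -/
theorem fif_zero (N : ℕ) (hN : 2 < N) (x : ℕ → ℝ)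
    (hx : ∀ i, 1 ≤ i → i < N → x i < x (i + 1))
    (L : ℕ → ℝ → ℝ)
    (hLs : ∀ i, 1 ≤ i → i < N → ∀ u ∈ Icc (x i) (x (i + 1)), ∃ t ∈ Icc (x 1) (x N), L i t = u)
    (γ : ℕ → ℝ) (hγ : ∀ i, 1 ≤ i → i < N → |γ i| < 1)
    (D : ℝ → ℝ) (hD : ContinuousOn D (Icc (x 1) (x N)))
    (hE : ∀ i, 1 ≤ i → i < N → ∀ t ∈ Icc (x 1) (x N), D (L i t) = γ i * D t) :
    ∀ t ∈ Icc (x 1) (x N), D t = 0 := by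
  have h1N : x 1 ≤ x N := fif_mono N x hx 1 N le_rfl (by omega) le_rfl
  obtain ⟨u, hu, hmax⟩ := isCompact_Icc.exists_isMaxOn (nonempty_Icc.2 h1N) hD.abs
  obtain ⟨i, hi, hiN, hu1, hu2⟩ := fif_cover x N (by omega) u hu.1 hu.2
  obtain ⟨s, hs, hsu⟩ := hLs i hi hiN u ⟨hu1, hu2⟩
  have h1 := hE i hi hiN s hs
  rw [hsu] at h1
  have h2 : |D s| ≤ |D u| := hmax hs
  have h3 : |D u| = |γ i| * |D s| := by rw [h1, abs_mul]
  have h4 : |D u| = 0 := by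
    have := hγ i hi hiN
    nlinarith [abs_nonneg (D u), abs_nonneg (D s), abs_nonneg (γ i)]
  intro t ht
  have h5 : |D t| ≤ |D u| := hmax ht
  rw [h4] at h5
  exact abs_nonpos_iff.1 h5

/-- existence of a continuous solution -/
theorem fif_exists (N : ℕ) (hN : 2 < N) (x : ℕ → ℝ)
    (hx : ∀ i, 1 ≤ i → i < N → x i < x (i + 1))
    (a : ℕ → ℝ) (ha0 : ∀ i, 1 ≤ i → i < N → 0 < a i)
    (ha : ∀ i, 1 ≤ i → i < N → a i * (x N - x 1) = x (i + 1) - x i)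
    (γ : ℕ → ℝ) (hγ : ∀ i, 1 ≤ i → i < N → |γ i| < 1)
    (s : ℕ → ℝ → ℝ) (hs : ∀ i, 1 ≤ i → i < N → ContinuousOn (s i) (Icc (x 1) (x N)))
    (y1 yN : ℝ) (hy1 : γ 1 * y1 + s 1 (x 1) = y1)
    (hyN : γ (N - 1) * yN + s (N - 1) (x N) = yN)
    (hj : ∀ i, 1 ≤ i → i + 1 < N →
      γ i * yN + s i (x N) = γ (i + 1) * y1 + s (i + 1) (x 1)) :
    ∃ g : ℝ → ℝ, ContinuousOn g (Icc (x 1) (x N)) ∧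
      ∀ i, 1 ≤ i → i < N → ∀ t ∈ Icc (x 1) (x N),
        g (x i + a i * (t - x 1)) = γ i * g t + s i t := by
  have h1N : x 1 < x N := lt_of_lt_of_le (hx 1 le_rfl (by omega))
    (fif_mono N x hx 2 N (by omega) (by omega) le_rfl)
  have h1m : x 1 ∈ Icc (x 1) (x N) := ⟨le_rfl, h1N.le⟩
  have hNm : x N ∈ Icc (x 1) (x N) := ⟨h1N.le, le_rfl⟩
  have hLm : ∀ i, 1 ≤ i → i < N → ∀ t ∈ Icc (x 1) (x N),
      x i + a i * (t - x 1) ∈ Icc (x i) (x (i + 1)) := by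
    intro i hi hiN t ht
    have h0 := ha0 i hi hiN
    have h1 := ha i hi hiN
    constructor
    · nlinarith [ht.1, mul_nonneg h0.le (sub_nonneg.2 ht.1)]
    · nlinarith [ht.1, mul_nonneg h0.le (sub_nonneg.2 ht.2)]
  have hJ : ∀ i, 1 ≤ i → i < N → Icc (x i) (x (i + 1)) ⊆ Icc (x 1) (x N) := by
    intro i hi hiN
    exact Icc_subset_Icc (fif_mono N x hx 1 i le_rfl hi (by omega))
      (fif_mono N x hx (i+1) N (by omega) (by omega) le_rfl)
  -- contraction constant
  obtain ⟨k, hk0, hk1, hk⟩ : ∃ k : ℝ, 0 ≤ k ∧ k < 1 ∧ ∀ i, 1 ≤ i → i < N → |γ i| ≤ k := by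
    have hne : (Finset.Ico 1 N).Nonempty := ⟨1, by simp; omega⟩
    refine ⟨(Finset.Ico 1 N).sup' hne (fun i => |γ i|), ?_, ?_, ?_⟩
    · exact (abs_nonneg (γ 1)).trans
        (Finset.le_sup' (fun i => |γ i|) (by simp; omega))
    · rw [Finset.sup'_lt_iff]
      intro i hi
      rw [Finset.mem_Ico] at hi
      exact hγ i hi.1 hi.2
    · intro i hi hiN
      exact Finset.le_sup' (fun i => |γ i|) (Finset.mem_Ico.2 ⟨hi, hiN⟩)
  -- extensions
  have hext : ∀ f : ℝ → ℝ, ContinuousOn f (Icc (x 1) (x N)) →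
      ∃ F : ℝ → ℝ, Continuous F ∧ ∀ t ∈ Icc (x 1) (x N), F t = f t := by
    intro f hf
    refine ⟨IccExtend h1N.le ((Icc (x 1) (x N)).domRestrict f), ?_, ?_⟩
    · exact (continuousOn_iff_continuous_domRestrict.1 hf).Icc_extend'
    · intro t ht
      rw [IccExtend_of_mem _ _ ht]
      rfl
  let S : Set C(Icc (x 1) (x N), ℝ) := {g | g ⟨x 1, h1m⟩ = y1 ∧ g ⟨x N, hNm⟩ = yN}
  have hSc : IsClosed S := by
    apply IsClosed.inter
    · exact isClosed_eq (continuous_eval_const _) continuous_const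
    · exact isClosed_eq (continuous_eval_const _) continuous_const
  have hSn : S.Nonempty := by
    refine ⟨⟨fun t => y1 + (yN - y1) * ((t - x 1) / (x N - x 1)), by fun_prop⟩, ?_, ?_⟩
    · simp
    · have : x N - x 1 ≠ 0 := (sub_pos.2 h1N).ne'
      simp [div_self this]
  have hT : ∀ g : S, ∃ h : S, ∀ i, 1 ≤ i → i < N → ∀ t (ht : t ∈ Icc (x 1) (x N))
      (hm : x i + a i * (t - x 1) ∈ Icc (x 1) (x N)),
      h.1 ⟨x i + a i * (t - x 1), hm⟩ = γ i * g.1 ⟨t, ht⟩ + s i t := by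
    rintro ⟨g, hg1, hg2⟩
    have hG : ∀ i, ∃ F : ℝ → ℝ, Continuous F ∧ (1 ≤ i → i < N → ∀ t (ht : t ∈ Icc (x 1) (x N)),
        F t = γ i * g ⟨t, ht⟩ + s i t) := by
      intro i
      by_cases hi : 1 ≤ i ∧ i < N
      · obtain ⟨F, hF, hF2⟩ := hext (s i) (hs i hi.1 hi.2)
        refine ⟨fun t => γ i * IccExtend h1N.le g t + F t, ?_, ?_⟩
        · exact (continuous_const.mul g.continuous.Icc_extend').add hF
        · intro _ _ t ht
          simp only [IccExtend_of_mem _ _ ht, hF2 t ht]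
      · exact ⟨fun _ => 0, continuous_const, fun h1 h2 => absurd ⟨h1, h2⟩ hi⟩
    choose F hFc hF using hG
    have hinv : ∀ i, 1 ≤ i → i < N → x 1 + (x (i+1) - x i) / a i = x N := by
      intro i hi hiN
      rw [← ha i hi hiN, mul_div_cancel_left₀ _ (ha0 i hi hiN).ne']
      ring
    obtain ⟨H, hHc, hH⟩ := fif_glue N x hx (fun i u => F i (x 1 + (u - x i) / a i))
      (fun i => (hFc i).comp (by fun_prop)) (by
        intro i hi hiN
        rw [hinv i hi (by omega), sub_self, zero_div, add_zero, hF i hi (by omega) _ hNm,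
          hF (i+1) (by omega) hiN _ h1m, hg1, hg2]
        exact hj i hi hiN) N (by omega) le_rfl
    refine ⟨⟨⟨fun t => H t, hHc.comp continuous_subtype_val⟩, ?_, ?_⟩, ?_⟩
    · simp only [ContinuousMap.coe_mk]
      rw [hH 1 le_rfl (by omega) (x 1) ⟨le_rfl, (hx 1 le_rfl (by omega)).le⟩, sub_self, zero_div,
        add_zero, hF 1 le_rfl (by omega) _ h1m, hg1, hy1]
    · simp only [ContinuousMap.coe_mk]
      have e : N - 1 + 1 = N := by omega
      have h2 := hH (N-1) (by omega) (by omega) (x N)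
        ⟨fif_mono N x hx _ _ (by omega) (by omega) le_rfl, by rw [e]⟩
      have h3 := hinv (N-1) (by omega) (by omega)
      rw [e] at h3
      rw [h2, h3, hF (N-1) (by omega) (by omega) _ hNm, hg2, hyN]
    · intro i hi hiN t ht hm
      simp only [ContinuousMap.coe_mk]
      rw [hH i hi hiN _ (hLm i hi hiN t ht)]
      have : x 1 + (x i + a i * (t - x 1) - x i) / a i = t := by
        rw [add_sub_cancel_left, mul_div_cancel_left₀ _ (ha0 i hi hiN).ne']
        ring
      rw [this, hF i hi hiN t ht]
  choose T hT using hT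
  have : CompleteSpace S := hSc.completeSpace_coe
  have : Nonempty S := hSn.to_subtype
  have hcon : ContractingWith ⟨k, hk0⟩ T := by
    refine ⟨by exact_mod_cast hk1, LipschitzWith.of_dist_le_mul ?_⟩
    intro f g
    rw [Subtype.dist_eq, Subtype.dist_eq]
    refine (ContinuousMap.dist_le (mul_nonneg hk0 dist_nonneg)).2 ?_
    rintro ⟨u, hu⟩
    obtain ⟨i, hi, hiN, hu1, hu2⟩ := fif_cover x N (by omega) u hu.1 hu.2
    have h0 := ha0 i hi hiN
    have h1 := ha i hi hiN
    have ht : x 1 + (u - x i) / a i ∈ Icc (x 1) (x N) := by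
      constructor
      · have := div_nonneg (sub_nonneg.2 hu1) h0.le
        linarith
      · have : (u - x i) / a i ≤ x N - x 1 := by
          rw [div_le_iff₀ h0]; linarith
        linarith
    have e : u = x i + a i * ((x 1 + (u - x i) / a i) - x 1) := by
      field_simp
      ring
    have key : ∀ g : S, (T g).1 ⟨u, hu⟩ = γ i * g.1 ⟨_, ht⟩ + s i (x 1 + (u - x i) / a i) := by
      intro g
      rw [← hT g i hi hiN _ ht (e ▸ hu)]
      congr 2
    rw [key f, key g, Real.dist_eq]
    have : γ i * f.1 ⟨_, ht⟩ + s i (x 1 + (u - x i) / a i) -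
      (γ i * g.1 ⟨_, ht⟩ + s i (x 1 + (u - x i) / a i)) = γ i * (f.1 ⟨_, ht⟩ - g.1 ⟨_, ht⟩) := by ring
    rw [this, abs_mul, ← Real.dist_eq]
    exact mul_le_mul (hk i hi hiN) (ContinuousMap.dist_apply_le_dist _) dist_nonneg hk0
  let G : S := hcon.fixedPoint T
  have hG : T G = G := hcon.fixedPoint_isFixedPt
  refine ⟨IccExtend h1N.le G.1, (G.1.continuous.Icc_extend').continuousOn, ?_⟩
  intro i hi hiN t ht
  have hm := hJ i hi hiN (hLm i hi hiN t ht)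
  rw [IccExtend_of_mem _ _ hm, IccExtend_of_mem _ _ ht, ← hT G i hi hiN t ht hm, hG]

/-- one differentiation step -/
theorem fif_step (N : ℕ) (hN : 2 < N) (x : ℕ → ℝ)
    (hx : ∀ i, 1 ≤ i → i < N → x i < x (i + 1))
    (a : ℕ → ℝ) (ha0 : ∀ i, 1 ≤ i → i < N → 0 < a i)
    (ha : ∀ i, 1 ≤ i → i < N → a i * (x N - x 1) = x (i + 1) - x i)
    (β : ℕ → ℝ) (ha1 : ∀ i, 1 ≤ i → i < N → a i < 1)
    (hβ : ∀ i, 1 ≤ i → i < N → |β i| < a i)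
    (r r' : ℕ → ℝ → ℝ)
    (hr : ∀ i, 1 ≤ i → i < N → ∀ t ∈ Icc (x 1) (x N), HasDerivAt (r i) (r' i t) t)
    (hr' : ∀ i, 1 ≤ i → i < N → ContinuousOn (r' i) (Icc (x 1) (x N)))
    (f : ℝ → ℝ) (hf : ContinuousOn f (Icc (x 1) (x N)))
    (hfe : ∀ i, 1 ≤ i → i < N → ∀ t ∈ Icc (x 1) (x N),
      f (x i + a i * (t - x 1)) = β i * f t + r i t)
    (y1 yN : ℝ) (hy1 : (β 1 * y1 + r' 1 (x 1)) / a 1 = y1)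
    (hyN : (β (N - 1) * yN + r' (N - 1) (x N)) / a (N - 1) = yN)
    (hj : ∀ i, 1 ≤ i → i + 1 < N →
      (β i * yN + r' i (x N)) / a i = (β (i + 1) * y1 + r' (i + 1) (x 1)) / a (i + 1)) :
    ∃ g : ℝ → ℝ, ContinuousOn g (Icc (x 1) (x N)) ∧
      (∀ i, 1 ≤ i → i < N → ∀ t ∈ Icc (x 1) (x N),
        g (x i + a i * (t - x 1)) = (β i * g t + r' i t) / a i) ∧
      ∀ t ∈ Icc (x 1) (x N), HasDerivWithinAt f (g t) (Icc (x 1) (x N)) t := by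
  have h1N : x 1 < x N := lt_of_lt_of_le (hx 1 le_rfl (by omega))
    (fif_mono N x hx 2 N (by omega) (by omega) le_rfl)
  have h1m : x 1 ∈ Icc (x 1) (x N) := ⟨le_rfl, h1N.le⟩
  have hNm : x N ∈ Icc (x 1) (x N) := ⟨h1N.le, le_rfl⟩
  obtain ⟨g, hgc, hge⟩ := fif_exists N hN x hx a ha0 ha (fun i => β i / a i)
    (by
      intro i hi hiN
      have h0 := ha0 i hi hiN
      rw [abs_div, abs_of_pos h0, div_lt_one h0]
      exact hβ i hi hiN)
    (fun i t => r' i t / a i) (fun i hi hiN => (hr' i hi hiN).div_const _) y1 yN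
    (by
      refine Eq.trans ?_ hy1
      ring)
    (by
      refine Eq.trans ?_ hyN
      ring)
    (by
      intro i hi hiN
      have := hj i hi hiN
      calc _ = (β i * yN + r' i (x N)) / a i := by ring
        _ = _ := this
        _ = _ := by ring)
  have hge' : ∀ i, 1 ≤ i → i < N → ∀ t ∈ Icc (x 1) (x N),
        g (x i + a i * (t - x 1)) = (β i * g t + r' i t) / a i := by
    intro i hi hiN t ht
    rw [hge i hi hiN t ht]; ring
  refine ⟨g, hgc, hge', ?_⟩
  -- continuous extension of g
  obtain ⟨G, hGc, hG⟩ : ∃ G : ℝ → ℝ, Continuous G ∧ ∀ t ∈ Icc (x 1) (x N), G t = g t := by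
    refine ⟨IccExtend h1N.le ((Icc (x 1) (x N)).domRestrict g), ?_, ?_⟩
    · exact (continuousOn_iff_continuous_domRestrict.1 hgc).Icc_extend'
    · intro t ht
      rw [IccExtend_of_mem _ _ ht]
      rfl
  let A : ℝ → ℝ := fun t => f (x 1) + ∫ u in (x 1)..t, G u
  have hA : ∀ t, HasDerivAt A (G t) t := fun t =>
    (intervalIntegral.integral_hasDerivAt_right (hGc.intervalIntegrable _ _)
      (hGc.stronglyMeasurableAtFilter _ _) hGc.continuousAt).const_add _
  have hAc : Continuous A := continuous_iff_continuousAt.2 fun t => (hA t).continuousAt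
  have hLI : ∀ i, 1 ≤ i → i < N → ∀ t ∈ Icc (x 1) (x N),
      x i + a i * (t - x 1) ∈ Icc (x 1) (x N) := by
    intro i hi hiN t ht
    have h0 := ha0 i hi hiN
    have h1 := ha i hi hiN
    have h2 := fif_mono N x hx 1 i le_rfl hi (by omega)
    have h3 := fif_mono N x hx (i+1) N (by omega) (by omega) le_rfl
    constructor
    · nlinarith [ht.1, mul_nonneg h0.le (sub_nonneg.2 ht.1)]
    · nlinarith [ht.1, mul_nonneg h0.le (sub_nonneg.2 ht.2)]
  -- the defect is constant
  have hconst : ∀ i, 1 ≤ i → i < N → ∀ t ∈ Icc (x 1) (x N),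
      A (x i + a i * (t - x 1)) - β i * A t - r i t
        = A (x i + a i * (x 1 - x 1)) - β i * A (x 1) - r i (x 1) := by
    intro i hi hiN t ht
    have hd : ∀ t ∈ Icc (x 1) (x N), HasDerivAt
        (fun t => A (x i + a i * (t - x 1)) - β i * A t - r i t) 0 t := by
      intro t ht
      have e1 : HasDerivAt (fun t => x i + a i * (t - x 1)) (a i * 1) t :=
        (((hasDerivAt_id t).sub_const (x 1)).const_mul (a i)).const_add (x i)
      have e2 := (((hA (x i + a i * (t - x 1))).comp t e1).sub ((hA t).const_mul (β i))).sub
        (hr i hi hiN t ht)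
      refine e2.congr_deriv ?_
      rw [hG _ (hLI i hi hiN t ht), hG t ht, hge' i hi hiN t ht]
      have := (ha0 i hi hiN).ne'
      field_simp
      ring
    exact constant_of_has_deriv_right_zero
      (fun t ht => (hd t ht).continuousAt.continuousWithinAt)
      (fun t ht => (hd t ⟨ht.1, ht.2.le⟩).hasDerivWithinAt) t ht
  let D : ℝ → ℝ := fun t => f t - A t
  have hD1 : D (x 1) = 0 := by simp [D, A]
  have hDe : ∀ i, 1 ≤ i → i < N → ∀ t ∈ Icc (x 1) (x N),
      D (x i + a i * (t - x 1)) = β i * D t + D (x i) := by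
    intro i hi hiN t ht
    have h1 := hconst i hi hiN t ht
    have h2 := hfe i hi hiN t ht
    have h3 := hfe i hi hiN (x 1) h1m
    simp only [sub_self, mul_zero, add_zero] at h1 h3
    have h4 : f (x 1) - A (x 1) = 0 := hD1
    simp only [D]
    linear_combination h2 - h1 - h3 - β i * h4
  have hDs : ∀ i, 1 ≤ i → i < N → D (x (i + 1)) - D (x i) = β i * D (x N) := by
    intro i hi hiN
    have h := hDe i hi hiN (x N) hNm
    rw [ha i hi hiN, add_sub_cancel] at h
    rw [h]; ring
  have hbd : ∀ n, 2 ≤ n → n ≤ N →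
      |D (x n)| * (x N - x 1) ≤ (x n - x 1) * |D (x N)| ∧
      (D (x N) ≠ 0 → |D (x n)| * (x N - x 1) < (x n - x 1) * |D (x N)|) := by
    have hstep : ∀ i, 1 ≤ i → i < N → 
      |D (x (i+1)) - D (x i)| * (x N - x 1) ≤ (x (i+1) - x i) * |D (x N)| ∧
      (D (x N) ≠ 0 → |D (x (i+1)) - D (x i)| * (x N - x 1) < (x (i+1) - x i) * |D (x N)|) := by
      intro i hi hiN
      rw [hDs i hi hiN, abs_mul, ← ha i hi hiN]
      have hp := sub_pos.2 h1N
      constructor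
      · have := mul_le_mul_of_nonneg_right (hβ i hi hiN).le
          (mul_nonneg (abs_nonneg (D (x N))) hp.le)
        linarith
      · intro hne
        have := mul_lt_mul_of_pos_right (hβ i hi hiN)
          (mul_pos (abs_pos.2 hne) hp)
        linarith
    intro n hn
    induction n, hn using Nat.le_induction with
    | base =>
      intro _
      have := hstep 1 le_rfl (by omega)
      simpa [hD1] using this
    | succ k hk ih =>
      intro hkN
      obtain ⟨i1, i2⟩ := ih (by omega)
      obtain ⟨j1, j2⟩ := hstep k (by omega) (by omega)
      have htri : |D (x (k+1))| ≤ |D (x (k+1)) - D (x k)| + |D (x k)| := by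
        simpa using abs_add_le (D (x (k+1)) - D (x k)) (D (x k))
      have htri2 := mul_le_mul_of_nonneg_right htri (sub_pos.2 h1N).le
      constructor
      · linarith
      · intro hne
        have := j2 hne
        linarith
  have hDN : D (x N) = 0 := by
    by_contra hne
    have := (hbd N (by omega) le_rfl).2 hne
    linarith
  have hDi : ∀ i, 1 ≤ i → i < N → D (x i) = 0 := by
    intro i hi
    induction i, hi using Nat.le_induction with
    | base => exact fun _ => hD1
    | succ k hk ih =>
      intro hkN
      have := hDs k hk (by omega)
      rw [ih (by omega), hDN] at this
      linarith
  have hD0 := fif_zero N hN x hx (fun i t => x i + a i * (t - x 1)) (by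
      intro i hi hiN u hu
      have h0 := ha0 i hi hiN
      have h1 := ha i hi hiN
      refine ⟨x 1 + (u - x i) / a i, ⟨?_, ?_⟩, ?_⟩
      · have := div_nonneg (sub_nonneg.2 hu.1) h0.le
        linarith
      · have : (u - x i) / a i ≤ x N - x 1 := by
          rw [div_le_iff₀ h0]; linarith [hu.2]
        linarith
      · field_simp
        ring) β (fun i hi hiN => (hβ i hi hiN).trans (ha1 i hi hiN))
    D (hf.sub hAc.continuousOn) (by
      intro i hi hiN t ht
      rw [hDe i hi hiN t ht, hDi i hi hiN, add_zero])
  have hfA : ∀ t ∈ Icc (x 1) (x N), f t = A t := fun t ht => sub_eq_zero.1 (hD0 t ht)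
  intro t ht
  rw [← hG t ht]
  exact ((hA t).hasDerivWithinAt).congr hfA (hfA t ht)

/-- (Barnsley–Harrington type result for rational FIFs.)
If `Fᵢ(x,y) = αᵢ y + qᵢ(x)` with `qᵢ = Pᵢ/Qᵢ` rational, `Qᵢ ≠ 0` on `I`,
`|αᵢ| < aᵢᵖ`, and the join-up conditions `F_{i-1,m}(x_N, y_{N,m}) = F_{i,m}(x₁, y_{1,m})`
hold for `i = 2,…,N-1`, `m = 1,…,p`, then the FIF `Ψ` is `p` times continuously
differentiable on `I`, and `Ψ⁽ᵐ⁾` is the unique continuous solution of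
`Ψ⁽ᵐ⁾(Lᵢ(x)) = (αᵢ Ψ⁽ᵐ⁾(x) + qᵢ⁽ᵐ⁾(x))/aᵢᵐ`. -/
theorem stmt_2
    (N : ℕ) (hN : 2 < N) (p : ℕ)
    (x : ℕ → ℝ)
    (hx : ∀ i, 1 ≤ i → i < N → x i < x (i + 1))
    (a : ℕ → ℝ)
    (ha : ∀ i, a i = (x (i + 1) - x i) / (x N - x 1))
    (L : ℕ → ℝ → ℝ)
    (hL : ∀ i, 1 ≤ i → i < N → ∀ t : ℝ, L i t =
      a i * t + (x N * x i - x 1 * x (i + 1)) / (x N - x 1))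
    (α : ℕ → ℝ)
    (P Q : ℕ → Polynomial ℝ)
    (q : ℕ → ℝ → ℝ)
    (hq : ∀ i, 1 ≤ i → i < N → ∀ t : ℝ, q i t = (P i).eval t / (Q i).eval t)
    (hQ : ∀ i, 1 ≤ i → i < N → ∀ t ∈ Set.Icc (x 1) (x N), (Q i).eval t ≠ 0)
    (hα : ∀ i, 1 ≤ i → i < N → |α i| < (a i) ^ p)
    (y1m yNm : ℕ → ℝ)
    (hy1m : ∀ m, 1 ≤ m → m ≤ p →
      y1m m = iteratedDeriv m (q 1) (x 1) / ((a 1) ^ m - α 1))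
    (hyNm : ∀ m, 1 ≤ m → m ≤ p →
      yNm m = iteratedDeriv m (q (N - 1)) (x N) / ((a (N - 1)) ^ m - α (N - 1)))
    (hjoin : ∀ i, 2 ≤ i → i < N → ∀ m, 1 ≤ m → m ≤ p →
      (α (i - 1) * yNm m + iteratedDeriv m (q (i - 1)) (x N)) / (a (i - 1)) ^ m =
        (α i * y1m m + iteratedDeriv m (q i) (x 1)) / (a i) ^ m)
    (Ψ : ℝ → ℝ)
    (hΨc : ContinuousOn Ψ (Set.Icc (x 1) (x N)))
    (hΨ : ∀ i, 1 ≤ i → i < N → ∀ t ∈ Set.Icc (x 1) (x N),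
      Ψ (L i t) = α i * Ψ t + q i t) :
    ContDiffOn ℝ p Ψ (Set.Icc (x 1) (x N)) ∧
    ∀ m, 1 ≤ m → m ≤ p →
      (ContinuousOn (iteratedDerivWithin m Ψ (Set.Icc (x 1) (x N)))
          (Set.Icc (x 1) (x N)) ∧
        (∀ i, 1 ≤ i → i < N → ∀ t ∈ Set.Icc (x 1) (x N),
          iteratedDerivWithin m Ψ (Set.Icc (x 1) (x N)) (L i t) =
            (α i * iteratedDerivWithin m Ψ (Set.Icc (x 1) (x N)) t
              + iteratedDeriv m (q i) t) / (a i) ^ m) ∧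
        (∀ g : ℝ → ℝ, ContinuousOn g (Set.Icc (x 1) (x N)) →
          (∀ i, 1 ≤ i → i < N → ∀ t ∈ Set.Icc (x 1) (x N),
            g (L i t) = (α i * g t + iteratedDeriv m (q i) t) / (a i) ^ m) →
          Set.EqOn g (iteratedDerivWithin m Ψ (Set.Icc (x 1) (x N)))
            (Set.Icc (x 1) (x N)))) := by
  have h1N : x 1 < x N := lt_of_lt_of_le (hx 1 le_rfl (by omega))
    (fif_mono N x hx 2 N (by omega) (by omega) le_rfl)
  have hp := sub_pos.2 h1N
  have ha0 : ∀ i, 1 ≤ i → i < N → 0 < a i := by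
    intro i hi hiN
    rw [ha i]
    exact div_pos (sub_pos.2 (hx i hi hiN)) hp
  have ha' : ∀ i, 1 ≤ i → i < N → a i * (x N - x 1) = x (i + 1) - x i := by
    intro i hi hiN
    rw [ha i, div_mul_cancel₀ _ hp.ne']
  have ha1 : ∀ i, 1 ≤ i → i < N → a i < 1 := by
    intro i hi hiN
    rw [ha i, div_lt_one hp]
    have h2 := fif_mono N x hx 1 i le_rfl hi (by omega)
    have h3 := fif_mono N x hx (i+1) N (by omega) (by omega) le_rfl
    rcases Nat.lt_or_ge i 2 with h | h
    · obtain rfl : i = 1 := by omega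
      have h4 := hx 2 (by omega) (by omega)
      have h5 := fif_mono N x hx 3 N (by omega) (by omega) le_rfl
      norm_num at *
      linarith
    · have h4 := hx 1 (by omega) (by omega)
      have h5 := fif_mono N x hx 2 i (by omega) (by omega) (by omega)
      norm_num at *
      linarith
  have hL' : ∀ i, 1 ≤ i → i < N → ∀ t, L i t = x i + a i * (t - x 1) := by
    intro i hi hiN t
    rw [hL i hi hiN t, ha i]
    field_simp
    ring
  have hαm : ∀ m, m ≤ p → ∀ i, 1 ≤ i → i < N → |α i| < a i ^ m := by
    intro m hm i hi hiN
    exact (hα i hi hiN).trans_le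
      (pow_le_pow_of_le_one (ha0 i hi hiN).le (ha1 i hi hiN).le hm)
  have hqd : ∀ i, 1 ≤ i → i < N → ∀ m, ∀ t ∈ Set.Icc (x 1) (x N),
      HasDerivAt (iteratedDeriv m (q i)) (iteratedDeriv (m + 1) (q i) t) t := by
    intro i hi hiN m t ht
    have hqe : q i = fun t => (P i).eval t / (Q i).eval t := funext (hq i hi hiN)
    have hcd : ContDiffAt ℝ ((m + 1 : ℕ) : WithTop ℕ∞) (q i) t := by
      rw [hqe]
      exact (show ContDiffAt ℝ _ (fun t => (P i).eval t) t from by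
        simpa using ((P i).contDiff_aeval (𝕜 := ℝ) _).contDiffAt).div
        (show ContDiffAt ℝ _ (fun t => (Q i).eval t) t from by
          simpa using ((Q i).contDiff_aeval (𝕜 := ℝ) _).contDiffAt) (hQ i hi hiN t ht)
    have hdf : DifferentiableAt ℝ (iteratedDeriv m (q i)) t := by
      rw [iteratedDeriv_eq_equiv_comp]
      exact ((ContinuousMultilinearMap.piFieldEquiv ℝ (Fin m)
        ℝ).symm.toContinuousLinearEquiv.differentiableAt).comp t
        (hcd.differentiableAt_iteratedFDeriv (by exact_mod_cast Nat.lt_succ_self m))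
    rw [iteratedDeriv_succ]
    exact hdf.hasDerivAt
  have hud : UniqueDiffOn ℝ (Set.Icc (x 1) (x N)) := uniqueDiffOn_Icc h1N
  -- passing from order m to order m+1
  have step : ∀ m, m + 1 ≤ p →
      ContinuousOn (iteratedDerivWithin m Ψ (Set.Icc (x 1) (x N))) (Set.Icc (x 1) (x N)) →
      (∀ i, 1 ≤ i → i < N → ∀ t ∈ Set.Icc (x 1) (x N),
          iteratedDerivWithin m Ψ (Set.Icc (x 1) (x N)) (L i t) =
            (α i * iteratedDerivWithin m Ψ (Set.Icc (x 1) (x N)) t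
              + iteratedDeriv m (q i) t) / (a i) ^ m) →
      DifferentiableOn ℝ (iteratedDerivWithin m Ψ (Set.Icc (x 1) (x N))) (Set.Icc (x 1) (x N)) ∧
      ContinuousOn (iteratedDerivWithin (m+1) Ψ (Set.Icc (x 1) (x N))) (Set.Icc (x 1) (x N)) ∧
      (∀ i, 1 ≤ i → i < N → ∀ t ∈ Set.Icc (x 1) (x N),
          iteratedDerivWithin (m+1) Ψ (Set.Icc (x 1) (x N)) (L i t) =
            (α i * iteratedDerivWithin (m+1) Ψ (Set.Icc (x 1) (x N)) t
              + iteratedDeriv (m+1) (q i) t) / (a i) ^ (m+1)) := by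
    intro m hm hc he
    have hden : ∀ i, 1 ≤ i → i < N → a i ^ (m+1) - α i ≠ 0 := by
      intro i hi hiN
      have := (abs_lt.1 (hαm (m+1) hm i hi hiN)).2
      linarith
    have hpm : ∀ i (u v : ℝ), (α i / a i ^ m * u + v / a i ^ m) / a i
        = (α i * u + v) / a i ^ (m+1) := by
      intro i u v
      rw [pow_succ, ← div_div]
      ring
    obtain ⟨g, hgc, hge, hgd⟩ := fif_step N hN x hx a ha0 ha' (fun i => α i / a i ^ m) ha1
      (by
        intro i hi hiN
        have h0 := pow_pos (ha0 i hi hiN) m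
        rw [abs_div, abs_of_pos h0, div_lt_iff₀ h0, ← pow_succ']
        exact hαm (m+1) hm i hi hiN)
      (fun i t => iteratedDeriv m (q i) t / a i ^ m)
      (fun i t => iteratedDeriv (m+1) (q i) t / a i ^ m)
      (fun i hi hiN t ht => (hqd i hi hiN m t ht).div_const _)
      (fun i hi hiN => ContinuousOn.div_const
        (fun t ht => (hqd i hi hiN (m+1) t ht).continuousAt.continuousWithinAt) _)
      (iteratedDerivWithin m Ψ (Set.Icc (x 1) (x N))) hc
      (by
        intro i hi hiN t ht
        rw [← hL' i hi hiN, he i hi hiN t ht]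
        ring)
      (y1m (m+1)) (yNm (m+1))
      (by
        rw [hpm, hy1m (m+1) (by omega) hm]
        have h1 := hden 1 le_rfl (by omega)
        have h2 := (pow_pos (ha0 1 le_rfl (by omega)) (m+1)).ne'
        rw [div_eq_iff h2]
        field_simp
        ring)
      (by
        rw [hpm, hyNm (m+1) (by omega) hm]
        have h1 := hden (N-1) (by omega) (by omega)
        have h2 := (pow_pos (ha0 (N-1) (by omega) (by omega)) (m+1)).ne'
        rw [div_eq_iff h2]
        field_simp
        ring)
      (by
        intro i hi hiN
        rw [hpm, hpm]
        have := hjoin (i+1) (by omega) hiN (m+1) (by omega) hm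
        simpa using this)
    have hEq : ∀ t ∈ Set.Icc (x 1) (x N),
        iteratedDerivWithin (m+1) Ψ (Set.Icc (x 1) (x N)) t = g t := by
      intro t ht
      rw [iteratedDerivWithin_succ]
      exact (hgd t ht).derivWithin (hud t ht)
    refine ⟨fun t ht => (hgd t ht).differentiableWithinAt, hgc.congr hEq, ?_⟩
    intro i hi hiN t ht
    have hmem : x i + a i * (t - x 1) ∈ Set.Icc (x 1) (x N) := by
      have h0 := ha0 i hi hiN
      have h1 := ha' i hi hiN
      have h2 := fif_mono N x hx 1 i le_rfl hi (by omega)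
      have h3 := fif_mono N x hx (i+1) N (by omega) (by omega) le_rfl
      constructor
      · nlinarith [ht.1, mul_nonneg h0.le (sub_nonneg.2 ht.1)]
      · nlinarith [ht.1, mul_nonneg h0.le (sub_nonneg.2 ht.2)]
    rw [hL' i hi hiN, hEq _ hmem, hEq t ht, hge i hi hiN t ht, hpm]
  have main : ∀ m, m ≤ p →
      ContinuousOn (iteratedDerivWithin m Ψ (Set.Icc (x 1) (x N))) (Set.Icc (x 1) (x N)) ∧
      (∀ i, 1 ≤ i → i < N → ∀ t ∈ Set.Icc (x 1) (x N),
          iteratedDerivWithin m Ψ (Set.Icc (x 1) (x N)) (L i t) =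
            (α i * iteratedDerivWithin m Ψ (Set.Icc (x 1) (x N)) t
              + iteratedDeriv m (q i) t) / (a i) ^ m) := by
    intro m
    induction m with
    | zero =>
      intro _
      simp only [iteratedDerivWithin_zero, iteratedDeriv_zero, pow_zero, div_one]
      exact ⟨hΨc, hΨ⟩
    | succ m ih =>
      intro hm
      obtain ⟨h1, h2⟩ := ih (by omega)
      exact (step m hm h1 h2).2
  refine ⟨?_, ?_⟩
  · apply contDiffOn_of_continuousOn_differentiableOn_deriv
    · intro m hm
      exact (main m (by exact_mod_cast hm)).1
    · intro m hm
      have hm' : m < p := by exact_mod_cast hm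
      obtain ⟨h1, h2⟩ := main m hm'.le
      exact (step m hm' h1 h2).1
  · intro m hm1 hm
    obtain ⟨h1, h2⟩ := main m hm
    refine ⟨h1, h2, ?_⟩
    intro g hgc hge t ht
    refine sub_eq_zero.1 (fif_zero N hN x hx L ?_ (fun i => α i / a i ^ m) ?_
      (fun t => g t - iteratedDerivWithin m Ψ (Set.Icc (x 1) (x N)) t) (hgc.sub h1) ?_ t ht)
    · intro i hi hiN u hu
      have h0 := ha0 i hi hiN
      have h1 := ha' i hi hiN
      refine ⟨x 1 + (u - x i) / a i, ⟨?_, ?_⟩, ?_⟩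
      · have := div_nonneg (sub_nonneg.2 hu.1) h0.le
        linarith
      · have : (u - x i) / a i ≤ x N - x 1 := by
          rw [div_le_iff₀ h0]; linarith [hu.2]
        linarith
      · rw [hL' i hi hiN]
        field_simp
        ring
    · intro i hi hiN
      have h0 := pow_pos (ha0 i hi hiN) m
      rw [abs_div, abs_of_pos h0, div_lt_one h0]
      exact hαm m hm i hi hiN
    · intro i hi hiN t ht
      rw [hge i hi hiN t ht, h2 i hi hiN t ht]
      ring
end

section
/- Let {(x_i, y_i, d_i) : i = 1,...,N} be given data with x_1 < x_2 < ... < x_N and y_i > 0 for all i. If the scaling factors satisfy α_i ∈ [0, min{a_i, y_i/y_1, y_{i+1}/y_N}) for each i = 1,...,N−1, and the shape parameters satisfy u_i > 0 and v_i ≥ max{0, −u_i[3 + (h_i d_i − α_i (x_N − x_1) d_1)/(y_i − α_i y_1)], −u_i[3 + (−h_i d_{i+1} + α_i (x_N − x_1) d_N)/(y_{i+1} − α_i y_N)]}, then the corresponding rational cubic spline fractal interpolation function Ψ satisfies Ψ(x) > 0 for all x ∈ I = [x_1, x_N]. -/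
/-- Positivity preservation. If the data is positive,
`αᵢ ∈ [0, min{aᵢ, yᵢ/y₁, y_{i+1}/y_N})`, `uᵢ > 0` and `vᵢ` is at least the
stated maximum, then the rational cubic spline FIF `Ψ` is positive on `I`. -/
theorem stmt_4
    (N : ℕ) (hN : 2 < N)
    (x y d : ℕ → ℝ)
    (hx : ∀ i, 1 ≤ i → i < N → x i < x (i + 1))
    (hy : ∀ i, 1 ≤ i → i ≤ N → 0 < y i)
    (a : ℕ → ℝ) (ha : ∀ i, a i = (x (i + 1) - x i) / (x N - x 1))
    (L : ℕ → ℝ → ℝ)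
    (hL : ∀ i, 1 ≤ i → i < N → ∀ t : ℝ, L i t =
      a i * t + (x N * x i - x 1 * x (i + 1)) / (x N - x 1))
    (α u v : ℕ → ℝ)
    (hα : ∀ i, 1 ≤ i → i < N →
      0 ≤ α i ∧ α i < min (a i) (min (y i / y 1) (y (i + 1) / y N)))
    (hu : ∀ i, 1 ≤ i → i < N → 0 < u i)
    (hv : ∀ i, 1 ≤ i → i < N →
      max 0 (max
        (-(u i) * (3 + ((x (i + 1) - x i) * d i - α i * (x N - x 1) * d 1)
          / (y i - α i * y 1)))
        (-(u i) * (3 + (-(x (i + 1) - x i) * d (i + 1) + α i * (x N - x 1) * d N)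
          / (y (i + 1) - α i * y N)))) ≤ v i)
    (U V W Z : ℕ → ℝ)
    (hU : ∀ i, U i = u i * (y i - α i * y 1))
    (hV : ∀ i, V i = (3 * u i + v i) * (y i - α i * y 1)
      + u i * (x (i + 1) - x i) * d i - α i * u i * (x N - x 1) * d 1)
    (hW : ∀ i, W i = (3 * u i + v i) * (y (i + 1) - α i * y N)
      - u i * (x (i + 1) - x i) * d (i + 1) + α i * u i * (x N - x 1) * d N)
    (hZ : ∀ i, Z i = u i * (y (i + 1) - α i * y N))
    (q : ℕ → ℝ → ℝ)
    (hq : ∀ (i : ℕ) (t θ : ℝ), θ = (t - x 1) / (x N - x 1) →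
      q i t = (U i * (1 - θ) ^ 3 + V i * θ * (1 - θ) ^ 2
        + W i * θ ^ 2 * (1 - θ) + Z i * θ ^ 3) / (u i + v i * θ * (1 - θ)))
    (Ψ : ℝ → ℝ)
    (hΨc : ContinuousOn Ψ (Set.Icc (x 1) (x N)))
    (hΨ : ∀ i, 1 ≤ i → i < N → ∀ t ∈ Set.Icc (x 1) (x N),
      Ψ (L i t) = α i * Ψ t + q i t)
    (hΨy : ∀ i, 1 ≤ i → i ≤ N → Ψ (x i) = y i) :
    ∀ t ∈ Set.Icc (x 1) (x N), 0 < Ψ t := by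
  have hmono : ∀ m n, 1 ≤ m → m ≤ n → n ≤ N → x m ≤ x n := by
    intro m n hm hmn
    induction n, hmn using Nat.le_induction with
    | base => intro _; exact le_refl _
    | succ k hk ih =>
      intro hkN
      exact (ih (by omega)).trans (hx k (by omega) (by omega)).le
  have hD : 0 < x N - x 1 := by
    have h1 := hx 1 le_rfl (by omega)
    have h2 := hmono 2 N (by omega) (by omega) le_rfl
    norm_num at h1
    linarith
  have hfind : ∀ t, x 1 ≤ t → ∀ n, 2 ≤ n → n ≤ N → t ≤ x n →
      ∃ i, 1 ≤ i ∧ i < N ∧ x i ≤ t ∧ t ≤ x (i + 1) := by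
    intro t ht n hn
    induction n, hn using Nat.le_induction with
    | base => intro _ h; exact ⟨1, le_rfl, by omega, ht, h⟩
    | succ k hk ih =>
      intro hkN h
      rcases le_total t (x k) with h' | h'
      · exact ih (by omega) h'
      · exact ⟨k, by omega, by omega, h', h⟩
  have hqpos : ∀ i, 1 ≤ i → i < N → ∀ t ∈ Set.Icc (x 1) (x N), 0 < q i t := by
    intro i hi hiN t ht
    obtain ⟨hα0, hα1⟩ := hα i hi hiN
    rw [lt_min_iff, lt_min_iff] at hα1
    obtain ⟨_, hαy, hαz⟩ := hα1
    rw [lt_div_iff₀ (hy 1 le_rfl (by omega))] at hαy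
    rw [lt_div_iff₀ (hy N (by omega) le_rfl)] at hαz
    have hB : 0 < y i - α i * y 1 := by linarith
    have hC : 0 < y (i + 1) - α i * y N := by linarith
    have hui := hu i hi hiN
    have hvi := hv i hi hiN
    rw [max_le_iff, max_le_iff] at hvi
    obtain ⟨hv0, hv1, hv2⟩ := hvi
    have hVi : 0 ≤ V i := by
      have h := mul_le_mul_of_nonneg_right hv1 hB.le
      have e := div_mul_cancel₀ ((x (i + 1) - x i) * d i - α i * (x N - x 1) * d 1) hB.ne'
      rw [hV]
      linear_combination h + u i * e
    have hWi : 0 ≤ W i := by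
      have h := mul_le_mul_of_nonneg_right hv2 hC.le
      have e := div_mul_cancel₀
        (-(x (i + 1) - x i) * d (i + 1) + α i * (x N - x 1) * d N) hC.ne'
      rw [hW]
      linear_combination h + u i * e
    have hUi : 0 < U i := by rw [hU]; positivity
    have hZi : 0 < Z i := by rw [hZ]; positivity
    rw [hq i t _ rfl]
    have hθ0 : 0 ≤ (t - x 1) / (x N - x 1) := div_nonneg (by linarith [ht.1]) hD.le
    have hθ1 : (t - x 1) / (x N - x 1) ≤ 1 := by
      rw [div_le_one hD]; linarith [ht.2]
    generalize (t - x 1) / (x N - x 1) = θ at hθ0 hθ1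
    have hη : 0 ≤ 1 - θ := by linarith
    apply div_pos
    · have h1 : 0 ≤ V i * θ * (1 - θ) ^ 2 := by positivity
      have h2 : 0 ≤ W i * θ ^ 2 * (1 - θ) := by positivity
      have h3 : 0 < U i * (1 - θ) ^ 3 + Z i * θ ^ 3 := by
        rcases hθ0.eq_or_lt with h | h
        · subst h; simpa using hUi
        · positivity
      linarith
    · positivity
  obtain ⟨t₀, ht₀, hmin⟩ := isCompact_Icc.exists_isMinOn
    (Set.nonempty_Icc.2 (by linarith : x 1 ≤ x N)) hΨc
  intro t ht
  refine lt_of_lt_of_le ?_ (hmin ht)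
  obtain ⟨i, hi, hiN, h1, h2⟩ := hfind t₀ ht₀.1 N (by omega) le_rfl ht₀.2
  have hxi := hx i hi hiN
  have hh : 0 < x (i + 1) - x i := by linarith
  have hai : α i < 1 := by
    refine ((hα i hi hiN).2.trans_le (min_le_left _ _)).trans_le ?_
    rw [ha, div_le_one hD]
    linarith [hmono 1 i le_rfl hi hiN.le, hmono (i + 1) N (by omega) hiN le_rfl]
  have hs : x 1 + (t₀ - x i) / (x (i + 1) - x i) * (x N - x 1) ∈ Set.Icc (x 1) (x N) := by
    have e0 : 0 ≤ (t₀ - x i) / (x (i + 1) - x i) := div_nonneg (by linarith) hh.le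
    have e1 : (t₀ - x i) / (x (i + 1) - x i) ≤ 1 := by
      rw [div_le_one hh]; linarith
    constructor
    · nlinarith
    · nlinarith
  have hLs : L i (x 1 + (t₀ - x i) / (x (i + 1) - x i) * (x N - x 1)) = t₀ := by
    rw [hL i hi hiN, ha]
    have := hD.ne'
    have := hh.ne'
    field_simp
    ring
  have hE := hΨ i hi hiN _ hs
  rw [hLs] at hE
  have hq0 := hqpos i hi hiN _ hs
  have hm := mul_le_mul_of_nonneg_left (hmin hs) (hα i hi hiN).1
  by_contra hneg
  push Not at hneg
  nlinarith
end

section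
/- Under the hypotheses y_i > 0 for all i, α_i ∈ [0, min{a_i, y_i/y_1, y_{i+1}/y_N}), u_i > 0 and v_i ≥ max{0, −u_i[3 + (h_i d_i − α_i (x_N − x_1) d_1)/(y_i − α_i y_1)], −u_i[3 + (−h_i d_{i+1} + α_i (x_N − x_1) d_N)/(y_{i+1} − α_i y_N)]}, the coefficients of the rational cubic q_i satisfy U_i > 0, Z_i > 0, V_i ≥ 0 and W_i ≥ 0, and consequently q_i(x) > 0 for all x ∈ I = [x_1, x_N]. -/
/-- Under the positivity hypotheses on `αᵢ, uᵢ, vᵢ`, the Bernstein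
coefficients satisfy `Uᵢ > 0`, `Zᵢ > 0`, `Vᵢ ≥ 0`, `Wᵢ ≥ 0`, and consequently
`qᵢ(x) > 0` for all `x ∈ I`. -/
theorem stmt_5
    (N : ℕ) (hN : 2 < N)
    (x y d : ℕ → ℝ)
    (hx : ∀ i, 1 ≤ i → i < N → x i < x (i + 1))
    (hy : ∀ i, 1 ≤ i → i ≤ N → 0 < y i)
    (a : ℕ → ℝ) (ha : ∀ i, a i = (x (i + 1) - x i) / (x N - x 1))
    (α u v : ℕ → ℝ)
    (hα : ∀ i, 1 ≤ i → i < N →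
      0 ≤ α i ∧ α i < min (a i) (min (y i / y 1) (y (i + 1) / y N)))
    (hu : ∀ i, 1 ≤ i → i < N → 0 < u i)
    (hv : ∀ i, 1 ≤ i → i < N →
      max 0 (max
        (-(u i) * (3 + ((x (i + 1) - x i) * d i - α i * (x N - x 1) * d 1)
          / (y i - α i * y 1)))
        (-(u i) * (3 + (-(x (i + 1) - x i) * d (i + 1) + α i * (x N - x 1) * d N)
          / (y (i + 1) - α i * y N)))) ≤ v i)
    (U V W Z : ℕ → ℝ)
    (hU : ∀ i, U i = u i * (y i - α i * y 1))
    (hV : ∀ i, V i = (3 * u i + v i) * (y i - α i * y 1)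
      + u i * (x (i + 1) - x i) * d i - α i * u i * (x N - x 1) * d 1)
    (hW : ∀ i, W i = (3 * u i + v i) * (y (i + 1) - α i * y N)
      - u i * (x (i + 1) - x i) * d (i + 1) + α i * u i * (x N - x 1) * d N)
    (hZ : ∀ i, Z i = u i * (y (i + 1) - α i * y N))
    (q : ℕ → ℝ → ℝ)
    (hq : ∀ (i : ℕ) (t θ : ℝ), θ = (t - x 1) / (x N - x 1) →
      q i t = (U i * (1 - θ) ^ 3 + V i * θ * (1 - θ) ^ 2
        + W i * θ ^ 2 * (1 - θ) + Z i * θ ^ 3) / (u i + v i * θ * (1 - θ))) :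
    ∀ i, 1 ≤ i → i < N →
      0 < U i ∧ 0 < Z i ∧ 0 ≤ V i ∧ 0 ≤ W i ∧
      ∀ t ∈ Set.Icc (x 1) (x N), 0 < q i t := by
  intro i h1 h2
  obtain ⟨hα0, hα1⟩ := hα i h1 h2
  obtain ⟨-, hα2⟩ := lt_min_iff.1 hα1
  obtain ⟨hα3, hα4⟩ := lt_min_iff.1 hα2
  have hui := hu i h1 h2
  have hA : 0 < y i - α i * y 1 :=
    sub_pos.2 ((lt_div_iff₀ (hy 1 le_rfl (by omega))).1 hα3)
  have hB : 0 < y (i + 1) - α i * y N :=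
    sub_pos.2 ((lt_div_iff₀ (hy N (by omega) le_rfl)).1 hα4)
  obtain ⟨hv0, hv1⟩ := max_le_iff.1 (hv i h1 h2)
  obtain ⟨hv2, hv3⟩ := max_le_iff.1 hv1
  have hU0 : 0 < U i := by rw [hU]; exact mul_pos hui hA
  have hZ0 : 0 < Z i := by rw [hZ]; exact mul_pos hui hB
  have key : ∀ A B : ℝ, 0 < A → -(u i) * (3 + B / A) ≤ v i →
      0 ≤ (3 * u i + v i) * A + u i * B := by
    intro A B hA h
    have h3 := mul_le_mul_of_nonneg_right h hA.le
    have h4 : -(u i) * (3 + B / A) * A = -(u i) * (3 * A + B) := by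
      field_simp
    rw [h4] at h3
    linarith
  have hV0 : 0 ≤ V i := by
    rw [hV]; have := key _ _ hA hv2; linarith
  have hW0 : 0 ≤ W i := by
    rw [hW]; have := key _ _ hB hv3; linarith
  refine ⟨hU0, hZ0, hV0, hW0, ?_⟩
  intro t ht
  obtain ⟨ht1, ht2⟩ := ht
  rw [hq i t _ rfl]
  have hθ0 : 0 ≤ (t - x 1) / (x N - x 1) := div_nonneg (by linarith) (by linarith)
  have hθ1 : (t - x 1) / (x N - x 1) ≤ 1 :=
    div_le_one_of_le₀ (by linarith) (by linarith)
  generalize (t - x 1) / (x N - x 1) = θ at hθ0 hθ1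
  have hφ : 0 ≤ 1 - θ := by linarith
  apply div_pos
  · have e1 : 0 ≤ V i * θ * (1 - θ) ^ 2 := by positivity
    have e2 : 0 ≤ W i * θ ^ 2 * (1 - θ) := by positivity
    rcases hθ0.eq_or_lt with h | h
    · subst h; simpa using hU0
    · have e3 : 0 ≤ U i * (1 - θ) ^ 3 := by positivity
      have e4 : 0 < Z i * θ ^ 3 := by positivity
      linarith
  · have : 0 ≤ v i * θ * (1 - θ) := by positivity
    linarith
end

section
/- Let {(x_i, y_i, d_i) : i = 1,...,N} be given data with x_1 < x_2 < ... < x_N and y_i > 0 for all i, and let C be the classical C^1 rational cubic spline defined on each [x_i, x_{i+1}] by C(x) = P_i^*(υ)/Q_i^*(υ) with υ = (x − x_i)/h_i, P_i^*(υ) = u_i y_i (1−υ)^3 + [(3u_i + v_i) y_i + u_i h_i d_i] υ(1−υ)^2 + [(3u_i + v_i) y_{i+1} − u_i h_i d_{i+1}] υ^2(1−υ) + u_i y_{i+1} υ^3 and Q_i^*(υ) = u_i + v_i υ(1−υ). If u_i > 0 and v_i ≥ max{0, −u_i[3 + h_i d_i / y_i], −u_i[3 − h_i d_{i+1} / y_{i+1}]}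 for every i, then C(x) > 0 for all x ∈ [x_1, x_N]. -/
/-- Positivity of the classical `C¹` rational cubic spline: if
`uᵢ > 0` and `vᵢ ≥ max{0, −uᵢ(3 + hᵢdᵢ/yᵢ), −uᵢ(3 − hᵢd_{i+1}/y_{i+1})}` for
every `i`, then `C(x) > 0` on `[x₁, x_N]`. -/
theorem stmt_6
    (N : ℕ) (hN : 2 < N)
    (x y d : ℕ → ℝ)
    (hx : ∀ i, 1 ≤ i → i < N → x i < x (i + 1))
    (hy : ∀ i, 1 ≤ i → i ≤ N → 0 < y i)
    (u v : ℕ → ℝ)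
    (hu : ∀ i, 1 ≤ i → i < N → 0 < u i)
    (hv : ∀ i, 1 ≤ i → i < N →
      max 0 (max
        (-(u i) * (3 + (x (i + 1) - x i) * d i / y i))
        (-(u i) * (3 - (x (i + 1) - x i) * d (i + 1) / y (i + 1)))) ≤ v i)
    (C : ℝ → ℝ)
    (hC : ∀ (i : ℕ), 1 ≤ i → i < N → ∀ t ∈ Set.Icc (x i) (x (i + 1)),
      ∀ υ : ℝ, υ = (t - x i) / (x (i + 1) - x i) →
      C t = (u i * y i * (1 - υ) ^ 3
        + ((3 * u i + v i) * y i + u i * (x (i + 1) - x i) * d i) * υ * (1 - υ) ^ 2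
        + ((3 * u i + v i) * y (i + 1)
            - u i * (x (i + 1) - x i) * d (i + 1)) * υ ^ 2 * (1 - υ)
        + u i * y (i + 1) * υ ^ 3) / (u i + v i * υ * (1 - υ))) :
    ∀ t ∈ Set.Icc (x 1) (x N), 0 < C t := by
  intro t ht
  have key : ∀ n, 2 ≤ n → n ≤ N → t ≤ x n →
      ∃ i, 1 ≤ i ∧ i < N ∧ t ∈ Set.Icc (x i) (x (i + 1)) := by
    intro n hn
    induction n, hn using Nat.le_induction with
    | base =>
      intro _ h
      exact ⟨1, le_refl _, by omega, ht.1, h⟩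
    | succ n hn ih =>
      intro h1 h2
      by_cases h : t ≤ x n
      · exact ih (by omega) h
      · exact ⟨n, by omega, by omega, (not_le.mp h).le, h2⟩
  obtain ⟨i, hi1, hiN, hti⟩ := key N hN.le le_rfl ht.2
  rw [hC i hi1 hiN t hti _ rfl]
  have hh : 0 < x (i + 1) - x i := sub_pos.mpr (hx i hi1 hiN)
  have h0 : 0 ≤ (t - x i) / (x (i + 1) - x i) :=
    div_nonneg (sub_nonneg.mpr hti.1) hh.le
  have h1 : 0 ≤ 1 - (t - x i) / (x (i + 1) - x i) := by
    rw [sub_nonneg, div_le_one hh]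
    linarith [hti.2]
  generalize (t - x i) / (x (i + 1) - x i) = s at h0 h1
  have hv' := hv i hi1 hiN
  simp only [max_le_iff] at hv'
  obtain ⟨v0, v1, v2⟩ := hv'
  have hui := hu i hi1 hiN
  have y0 := hy i hi1 hiN.le
  have y1 := hy (i + 1) (by omega) hiN
  have e1 : 0 ≤ (3 * u i + v i) * y i + u i * (x (i + 1) - x i) * d i := by
    have := mul_le_mul_of_nonneg_right v1 y0.le
    have e : -(u i) * (3 + (x (i + 1) - x i) * d i / y i) * y i
      = -(u i) * (3 * y i + (x (i + 1) - x i) * d i) := by field_simp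
    linarith
  have e2 : 0 ≤ (3 * u i + v i) * y (i + 1) - u i * (x (i + 1) - x i) * d (i + 1) := by
    have := mul_le_mul_of_nonneg_right v2 y1.le
    have e : -(u i) * (3 - (x (i + 1) - x i) * d (i + 1) / y (i + 1)) * y (i + 1)
      = -(u i) * (3 * y (i + 1) - (x (i + 1) - x i) * d (i + 1)) := by field_simp
    linarith
  apply div_pos
  · have a1 := mul_nonneg (mul_nonneg e1 h0) (pow_nonneg h1 2)
    have a2 := mul_nonneg (mul_nonneg e2 (pow_nonneg h0 2)) h1
    have b0 : 0 ≤ u i * y i * (1 - s) ^ 3 := by positivity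
    have b1 : 0 ≤ u i * y (i + 1) * s ^ 3 := by positivity
    rcases h0.eq_or_lt with h | h
    · have : 0 < u i * y i * (1 - s) ^ 3 := by
        rw [← h]; simp; positivity
      linarith
    · have : 0 < u i * y (i + 1) * s ^ 3 := by positivity
      linarith
  · have := mul_nonneg (mul_nonneg v0 h0) h1
    linarith
end

section
/- Let {(x_i, y_i, d_i) : i = 1,...,N} be given data with x_1 < ... < x_N, and let c < min{y_i} and d > max{y_i}. Suppose for each i = 1,...,N−1: 0 ≤ α_i < min{a_i, (y_i − c)/(y_1 − c), (y_{i+1} − c)/(y_N − c), (d − y_i)/(d − y_1), (d − y_{i+1})/(d − y_N)}, u_i > 0, and v_i ≥ max{0, v_{1i}, v_{2i}, v_{3i}, v_{4i}}, where v_{1i} = −u_i[3 + (h_i d_i − α_i(x_N − x_1) d_1)/(y_i − c − α_i(y_1 − c))], v_{2i} = −u_i[3 + (−h_i d_{i+1} + α_i(x_N − x_1) d_N)/(y_{i+1} − c − α_i(y_N − c))], v_{3i} = −u_i[3 + (−h_i d_i + α_i(x_N − x_1) d_1)/(d − y_i − α_i(d − y_1))], v_{4i} = −u_i[3 + (h_i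 d_{i+1} − α_i(x_N − x_1) d_N)/(d − y_{i+1} − α_i(d − y_N))]. Then the corresponding rational cubic spline fractal interpolation function Ψ satisfies c ≤ Ψ(x) ≤ d for all x ∈ I = [x_1, x_N], i.e. its graph lies within the rectangle [x_1, x_N] × [c, d]. -/
theorem core_nonneg (u v p r D E θ : ℝ) (hu : 0 < u) (hv : 0 ≤ v) (hp : 0 < p) (hr : 0 < r)
    (h1 : -u * (3 + D / p) ≤ v) (h2 : -u * (3 + E / r) ≤ v) (h0 : 0 ≤ θ) (h1' : θ ≤ 1) :
    0 < u + v * θ * (1 - θ) ∧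
    0 ≤ (u * p) * (1 - θ) ^ 3 + ((3 * u + v) * p + u * D) * θ * (1 - θ) ^ 2
      + ((3 * u + v) * r + u * E) * θ ^ 2 * (1 - θ) + (u * r) * θ ^ 3 := by
  have hm : 0 ≤ 1 - θ := by linarith
  have hD : 0 ≤ (3 * u + v) * p + u * D := by
    have h := mul_le_mul_of_nonneg_right h1 hp.le
    have e : -u * (3 + D / p) * p = -u * (3 * p + D) := by field_simp
    rw [e] at h
    linarith
  have hE : 0 ≤ (3 * u + v) * r + u * E := by
    have h := mul_le_mul_of_nonneg_right h2 hr.le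
    have e : -u * (3 + E / r) * r = -u * (3 * r + E) := by field_simp
    rw [e] at h
    linarith
  constructor
  · positivity
  · positivity

theorem piece_exists (x : ℕ → ℝ) (s : ℝ) (hs : x 1 ≤ s) (n : ℕ) (hn : 2 ≤ n) :
    s ≤ x n → ∃ i, 1 ≤ i ∧ i < n ∧ x i ≤ s ∧ s ≤ x (i + 1) := by
  induction n, hn using Nat.le_induction with
  | base => intro h; exact ⟨1, le_refl _, by norm_num, hs, h⟩
  | succ k hk ih =>
    intro h
    by_cases hsk : s ≤ x k
    · obtain ⟨i, h1, h2, h3⟩ := ih hsk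
      exact ⟨i, h1, by omega, h3⟩
    · exact ⟨k, by omega, by omega, (not_le.mp hsk).le, h⟩

theorem knots_mono (N : ℕ) (x : ℕ → ℝ) (hx : ∀ i, 1 ≤ i → i < N → x i < x (i + 1))
    (i : ℕ) (hi : 1 ≤ i) (j : ℕ) (hij : i ≤ j) : j ≤ N → x i ≤ x j := by
  induction j, hij using Nat.le_induction with
  | base => intro _; exact le_refl _
  | succ k hk ih =>
    intro h
    exact (ih (by omega)).trans (hx k (by omega) (by omega)).le

/-- Containment of the graph of the RCSFIF in the rectangle
`[x₁, x_N] × [c, δ]`, in the case `0 ≤ αᵢ`. -/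
theorem stmt_7
    (N : ℕ) (hN : 2 < N)
    (x y d : ℕ → ℝ) (c δ : ℝ)
    (hx : ∀ i, 1 ≤ i → i < N → x i < x (i + 1))
    (hc : ∀ i, 1 ≤ i → i ≤ N → c < y i)
    (hδ : ∀ i, 1 ≤ i → i ≤ N → y i < δ)
    (a : ℕ → ℝ) (ha : ∀ i, a i = (x (i + 1) - x i) / (x N - x 1))
    (L : ℕ → ℝ → ℝ)
    (hL : ∀ i, 1 ≤ i → i < N → ∀ t : ℝ, L i t =
      a i * t + (x N * x i - x 1 * x (i + 1)) / (x N - x 1))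
    (α u v : ℕ → ℝ)
    (hα : ∀ i, 1 ≤ i → i < N →
      0 ≤ α i ∧ α i < min (a i) (min
        (min ((y i - c) / (y 1 - c)) ((y (i + 1) - c) / (y N - c)))
        (min ((δ - y i) / (δ - y 1)) ((δ - y (i + 1)) / (δ - y N)))))
    (hu : ∀ i, 1 ≤ i → i < N → 0 < u i)
    (hv : ∀ i, 1 ≤ i → i < N →
      max 0 (max
        (max
          (-(u i) * (3 + ((x (i + 1) - x i) * d i - α i * (x N - x 1) * d 1)
            / (y i - c - α i * (y 1 - c))))
          (-(u i) * (3 + (-(x (i + 1) - x i) * d (i + 1) + α i * (x N - x 1) * d N)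
            / (y (i + 1) - c - α i * (y N - c)))))
        (max
          (-(u i) * (3 + (-(x (i + 1) - x i) * d i + α i * (x N - x 1) * d 1)
            / (δ - y i - α i * (δ - y 1))))
          (-(u i) * (3 + ((x (i + 1) - x i) * d (i + 1) - α i * (x N - x 1) * d N)
            / (δ - y (i + 1) - α i * (δ - y N)))))) ≤ v i)
    (U V W Z : ℕ → ℝ)
    (hU : ∀ i, U i = u i * (y i - α i * y 1))
    (hV : ∀ i, V i = (3 * u i + v i) * (y i - α i * y 1)
      + u i * (x (i + 1) - x i) * d i - α i * u i * (x N - x 1) * d 1)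
    (hW : ∀ i, W i = (3 * u i + v i) * (y (i + 1) - α i * y N)
      - u i * (x (i + 1) - x i) * d (i + 1) + α i * u i * (x N - x 1) * d N)
    (hZ : ∀ i, Z i = u i * (y (i + 1) - α i * y N))
    (q : ℕ → ℝ → ℝ)
    (hq : ∀ (i : ℕ) (t θ : ℝ), θ = (t - x 1) / (x N - x 1) →
      q i t = (U i * (1 - θ) ^ 3 + V i * θ * (1 - θ) ^ 2
        + W i * θ ^ 2 * (1 - θ) + Z i * θ ^ 3) / (u i + v i * θ * (1 - θ)))
    (Ψ : ℝ → ℝ)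
    (hΨc : ContinuousOn Ψ (Set.Icc (x 1) (x N)))
    (hΨ : ∀ i, 1 ≤ i → i < N → ∀ t ∈ Set.Icc (x 1) (x N),
      Ψ (L i t) = α i * Ψ t + q i t)
    (hΨy : ∀ i, 1 ≤ i → i ≤ N → Ψ (x i) = y i) :
    ∀ t ∈ Set.Icc (x 1) (x N), Ψ t ∈ Set.Icc c δ := by
  have hxN : x 1 < x N := (hx 1 le_rfl (by omega)).trans_le
    (knots_mono N x hx 2 (by norm_num) N hN.le le_rfl)
  have hH : 0 < x N - x 1 := by linarith
  have hne : (Set.Icc (x 1) (x N)).Nonempty := ⟨x 1, le_rfl, hxN.le⟩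
  have key : ∀ s ∈ Set.Icc (x 1) (x N), ∃ i, ∃ t ∈ Set.Icc (x 1) (x N),
      0 ≤ α i ∧ α i < 1 ∧ Ψ s = α i * Ψ t + q i t ∧
      (1 - α i) * c ≤ q i t ∧ q i t ≤ (1 - α i) * δ := by
    intro s hs
    obtain ⟨i, hi1, hiN, hs1, hs2⟩ := piece_exists x s hs.1 N hN.le hs.2
    have hh : 0 < x (i + 1) - x i := by linarith [hx i hi1 hiN]
    obtain ⟨hα0, hαm⟩ := hα i hi1 hiN
    simp only [lt_min_iff] at hαm
    obtain ⟨hαa, ⟨hα1, hα2⟩, hα3, hα4⟩ := hαm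
    have hv' := hv i hi1 hiN
    simp only [max_le_iff] at hv'
    obtain ⟨hv0, ⟨hv1, hv2⟩, hv3, hv4⟩ := hv'
    have hu' := hu i hi1 hiN
    rw [lt_div_iff₀ (by linarith [hc 1 le_rfl (by omega)])] at hα1
    rw [lt_div_iff₀ (by linarith [hc N (by omega) le_rfl])] at hα2
    rw [lt_div_iff₀ (by linarith [hδ 1 le_rfl (by omega)])] at hα3
    rw [lt_div_iff₀ (by linarith [hδ N (by omega) le_rfl])] at hα4
    have hαlt : α i < 1 := by
      refine hαa.trans_le ?_
      rw [ha, div_le_one hH]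
      linarith [knots_mono N x hx 1 le_rfl i hi1 hiN.le,
        knots_mono N x hx (i + 1) (by omega) N hiN le_rfl]
    obtain ⟨θ, hθ⟩ : ∃ θ, θ = (s - x i) / (x (i + 1) - x i) := ⟨_, rfl⟩
    have hθ0 : 0 ≤ θ := by rw [hθ]; exact div_nonneg (by linarith) hh.le
    have hθ1 : θ ≤ 1 := by rw [hθ, div_le_one hh]; linarith
    have hsθ : s = x i + θ * (x (i + 1) - x i) := by
      rw [hθ]; field_simp; ring
    obtain ⟨t, ht⟩ : ∃ t, t = x 1 + θ * (x N - x 1) := ⟨_, rfl⟩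
    have htI : t ∈ Set.Icc (x 1) (x N) := by
      constructor <;> rw [ht] <;> nlinarith
    have htθ : θ = (t - x 1) / (x N - x 1) := by
      rw [ht]; field_simp; ring
    have hLt : L i t = s := by
      rw [hL i hi1 hiN, ha, ht, hsθ]; field_simp; ring
    have hqt := hq i t θ htθ
    obtain ⟨hden, hlow⟩ := core_nonneg (u i) (v i) _ _ _ _ θ hu' hv0
      (by linarith) (by linarith) hv1 hv2 hθ0 hθ1
    obtain ⟨_, hup⟩ := core_nonneg (u i) (v i) _ _ _ _ θ hu' hv0
      (by linarith) (by linarith) hv3 hv4 hθ0 hθ1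
    refine ⟨i, t, htI, hα0, hαlt, ?_, ?_, ?_⟩
    · rw [← hLt]; exact hΨ i hi1 hiN t htI
    · rw [hqt, le_div_iff₀ hden, hU, hV, hW, hZ, ← sub_nonneg]
      refine hlow.trans (le_of_eq ?_)
      ring
    · rw [hqt, div_le_iff₀ hden, hU, hV, hW, hZ, ← sub_nonneg]
      refine hup.trans (le_of_eq ?_)
      ring
  intro s hs
  constructor
  · obtain ⟨m, hm, hmin⟩ := isCompact_Icc.exists_isMinOn hne hΨc
    obtain ⟨i, t, ht, h0, h1, he, hl, _⟩ := key m hm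
    have hmt : Ψ m ≤ Ψ t := hmin ht
    have hms : Ψ m ≤ Ψ s := hmin hs
    have := mul_le_mul_of_nonneg_left hmt h0
    have h3 : c ≤ Ψ m := le_of_mul_le_mul_left (a := 1 - α i) (by linarith) (by linarith)
    linarith
  · obtain ⟨m, hm, hmax⟩ := isCompact_Icc.exists_isMaxOn hne hΨc
    obtain ⟨i, t, ht, h0, h1, he, _, hl⟩ := key m hm
    have hmt : Ψ t ≤ Ψ m := hmax ht
    have hms : Ψ s ≤ Ψ m := hmax hs
    have := mul_le_mul_of_nonneg_left hmt h0
    have h3 : Ψ m ≤ δ := le_of_mul_le_mul_left (a := 1 - α i) (by linarith) (by linarith)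
    linarith
end

section
/- Let {(x_i, y_i, d_i) : i = 1,...,N} be given data with x_1 < ... < x_N, and let c < min{y_i} and d > max{y_i}. Suppose for each i = 1,...,N−1: max{−a_i, (y_i − c)/(y_1 − d), (y_{i+1} − c)/(y_N − d), (d − y_i)/(c − y_1), (d − y_{i+1})/(c − y_N)} < α_i < 0, u_i > 0, and v_i ≥ max{0, v_{5i}, v_{6i}, v_{7i}, v_{8i}}, where v_{5i} = −u_i[3 + (h_i d_i − α_i(x_N − x_1) d_1)/(y_i − c − α_i(y_1 − d))], v_{6i} = −u_i[3 + (−h_i d_{i+1} + α_i(x_N − x_1) d_N)/(y_{i+1} − c − α_i(y_N − d))], v_{7i} = −u_i[3 + (−h_i d_i + α_i(x_N − x_1) d_1)/(d − y_i − α_i(c − y_1))], v_{8i} = −u_i[3 + (h_i d_{i+1} − α_i(x_N − x_1) d_N)/(d − y_{i+1} − α_i(c − y_N))]. Then the corresponding rational cubic spline fractal interpolation function Ψ satisfies c ≤ Ψ(x) ≤ d for all x ∈ I = [x_1, x_N]. -/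
theorem aux_lower (A B C D u v k θ : ℝ) (hu : 0 < u) (hv : 0 ≤ v) (h0 : 0 ≤ θ) (h1 : θ ≤ 1)
    (hA : 0 ≤ A - k * u) (hB : 0 ≤ B - k * (3 * u + v)) (hC : 0 ≤ C - k * (3 * u + v))
    (hD : 0 ≤ D - k * u) :
    k ≤ (A * (1 - θ) ^ 3 + B * θ * (1 - θ) ^ 2 + C * θ ^ 2 * (1 - θ) + D * θ ^ 3)
      / (u + v * θ * (1 - θ)) := by
  have h2 : 0 ≤ 1 - θ := by linarith
  have hp : 0 < u + v * θ * (1 - θ) := by positivity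
  rw [le_div_iff₀ hp]
  have e1 := mul_nonneg hA (pow_nonneg h2 3)
  have e2 := mul_nonneg hB (mul_nonneg h0 (pow_nonneg h2 2))
  have e3 := mul_nonneg hC (mul_nonneg (pow_nonneg h0 2) h2)
  have e4 := mul_nonneg hD (pow_nonneg h0 3)
  linarith

theorem aux_upper (A B C D u v k θ : ℝ) (hu : 0 < u) (hv : 0 ≤ v) (h0 : 0 ≤ θ) (h1 : θ ≤ 1)
    (hA : 0 ≤ k * u - A) (hB : 0 ≤ k * (3 * u + v) - B) (hC : 0 ≤ k * (3 * u + v) - C)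
    (hD : 0 ≤ k * u - D) :
    (A * (1 - θ) ^ 3 + B * θ * (1 - θ) ^ 2 + C * θ ^ 2 * (1 - θ) + D * θ ^ 3)
      / (u + v * θ * (1 - θ)) ≤ k := by
  have h2 : 0 ≤ 1 - θ := by linarith
  have hp : 0 < u + v * θ * (1 - θ) := by positivity
  rw [div_le_iff₀ hp]
  have e1 := mul_nonneg hA (pow_nonneg h2 3)
  have e2 := mul_nonneg hB (mul_nonneg h0 (pow_nonneg h2 2))
  have e3 := mul_nonneg hC (mul_nonneg (pow_nonneg h0 2) h2)
  have e4 := mul_nonneg hD (pow_nonneg h0 3)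
  linarith

theorem aux_v (u v p g : ℝ) (hp : 0 < p) (h : -u * (3 + g / p) ≤ v) :
    0 ≤ (3 * u + v) * p + u * g := by
  have h1 := mul_le_mul_of_nonneg_right h hp.le
  have h2 : -u * (3 + g / p) * p = -u * (3 * p + g) := by field_simp
  rw [h2] at h1
  linarith

theorem aux_cover (x : ℕ → ℝ) (N : ℕ) (t : ℝ) (h1 : x 1 ≤ t) (hN : 2 ≤ N) (h2 : t ≤ x N) :
    ∃ i, 1 ≤ i ∧ i < N ∧ x i ≤ t ∧ t ≤ x (i + 1) := by
  induction N, hN using Nat.le_induction with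
  | base => exact ⟨1, le_refl _, by norm_num, h1, h2⟩
  | succ n hn ih =>
    by_cases h : t ≤ x n
    · obtain ⟨i, a, b, c⟩ := ih h
      exact ⟨i, a, by omega, c⟩
    · exact ⟨n, by omega, by omega, (not_le.mp h).le, h2⟩

/-- Containment of the graph of the RCSFIF in the rectangle
`[x₁, x_N] × [c, δ]`, in the case `−aᵢ < αᵢ < 0`. -/
theorem stmt_8
    (N : ℕ) (hN : 2 < N)
    (x y d : ℕ → ℝ) (c δ : ℝ)
    (hx : ∀ i, 1 ≤ i → i < N → x i < x (i + 1))
    (hc : ∀ i, 1 ≤ i → i ≤ N → c < y i)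
    (hδ : ∀ i, 1 ≤ i → i ≤ N → y i < δ)
    (a : ℕ → ℝ) (ha : ∀ i, a i = (x (i + 1) - x i) / (x N - x 1))
    (L : ℕ → ℝ → ℝ)
    (hL : ∀ i, 1 ≤ i → i < N → ∀ t : ℝ, L i t =
      a i * t + (x N * x i - x 1 * x (i + 1)) / (x N - x 1))
    (α u v : ℕ → ℝ)
    (hα : ∀ i, 1 ≤ i → i < N →
      max (-(a i)) (max
        (max ((y i - c) / (y 1 - δ)) ((y (i + 1) - c) / (y N - δ)))
        (max ((δ - y i) / (c - y 1)) ((δ - y (i + 1)) / (c - y N)))) < α i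
      ∧ α i < 0)
    (hu : ∀ i, 1 ≤ i → i < N → 0 < u i)
    (hv : ∀ i, 1 ≤ i → i < N →
      max 0 (max
        (max
          (-(u i) * (3 + ((x (i + 1) - x i) * d i - α i * (x N - x 1) * d 1)
            / (y i - c - α i * (y 1 - δ))))
          (-(u i) * (3 + (-(x (i + 1) - x i) * d (i + 1) + α i * (x N - x 1) * d N)
            / (y (i + 1) - c - α i * (y N - δ)))))
        (max
          (-(u i) * (3 + (-(x (i + 1) - x i) * d i + α i * (x N - x 1) * d 1)
            / (δ - y i - α i * (c - y 1))))
          (-(u i) * (3 + ((x (i + 1) - x i) * d (i + 1) - α i * (x N - x 1) * d N)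
            / (δ - y (i + 1) - α i * (c - y N)))))) ≤ v i)
    (U V W Z : ℕ → ℝ)
    (hU : ∀ i, U i = u i * (y i - α i * y 1))
    (hV : ∀ i, V i = (3 * u i + v i) * (y i - α i * y 1)
      + u i * (x (i + 1) - x i) * d i - α i * u i * (x N - x 1) * d 1)
    (hW : ∀ i, W i = (3 * u i + v i) * (y (i + 1) - α i * y N)
      - u i * (x (i + 1) - x i) * d (i + 1) + α i * u i * (x N - x 1) * d N)
    (hZ : ∀ i, Z i = u i * (y (i + 1) - α i * y N))
    (q : ℕ → ℝ → ℝ)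
    (hq : ∀ (i : ℕ) (t θ : ℝ), θ = (t - x 1) / (x N - x 1) →
      q i t = (U i * (1 - θ) ^ 3 + V i * θ * (1 - θ) ^ 2
        + W i * θ ^ 2 * (1 - θ) + Z i * θ ^ 3) / (u i + v i * θ * (1 - θ)))
    (Ψ : ℝ → ℝ)
    (hΨc : ContinuousOn Ψ (Set.Icc (x 1) (x N)))
    (hΨ : ∀ i, 1 ≤ i → i < N → ∀ t ∈ Set.Icc (x 1) (x N),
      Ψ (L i t) = α i * Ψ t + q i t)
    (hΨy : ∀ i, 1 ≤ i → i ≤ N → Ψ (x i) = y i) :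
    ∀ t ∈ Set.Icc (x 1) (x N), Ψ t ∈ Set.Icc c δ := by
  have mono : ∀ i j, 1 ≤ i → i ≤ j → j ≤ N → x i ≤ x j := by
    intro i j hi hij
    induction j, hij using Nat.le_induction with
    | base => intro _; exact le_refl _
    | succ n hn ih =>
      intro h
      exact (ih (by omega)).trans (hx n (by omega) (by omega)).le
  have hT : 0 < x N - x 1 := by
    have e1 := hx 1 le_rfl (by omega)
    have e2 := mono 2 N (by omega) (by omega) le_rfl
    norm_num at e1
    linarith
  have hα1 : ∀ i, 1 ≤ i → i < N → -1 < α i := by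
    intro i h1 h2
    have e := (lt_of_le_of_lt (le_max_left _ _) (hα i h1 h2).1)
    have e2 : a i ≤ 1 := by
      rw [ha, div_le_one hT]
      have := mono 1 i le_rfl h1 h2.le
      have := mono (i + 1) N (by omega) (by omega) le_rfl
      linarith
    linarith
  have key : ∀ i, 1 ≤ i → i < N → ∀ t ∈ Set.Icc (x 1) (x N),
      c - α i * δ ≤ q i t ∧ q i t ≤ δ - α i * c := by
    intro i h1 h2 t ht
    have hα' := hα i h1 h2
    simp only [max_lt_iff] at hα'
    obtain ⟨⟨-, ⟨p1, p2⟩, p3, p4⟩, hneg⟩ := hα'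
    have hv' := hv i h1 h2
    simp only [max_le_iff] at hv'
    obtain ⟨hv0, ⟨v5, v6⟩, v7, v8⟩ := hv'
    have hui := hu i h1 h2
    have c1 := hc 1 le_rfl (by omega)
    have cN := hc N (by omega) le_rfl
    have d1 := hδ 1 le_rfl (by omega)
    have dN := hδ N (by omega) le_rfl
    rw [div_lt_iff_of_neg (by linarith)] at p1 p2 p3 p4
    have r1 : 0 < y i - c - α i * (y 1 - δ) := by linarith
    have r2 : 0 < y (i + 1) - c - α i * (y N - δ) := by linarith
    have r3 : 0 < δ - y i - α i * (c - y 1) := by linarith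
    have r4 : 0 < δ - y (i + 1) - α i * (c - y N) := by linarith
    have w5 := aux_v _ _ _ _ r1 v5
    have w6 := aux_v _ _ _ _ r2 v6
    have w7 := aux_v _ _ _ _ r3 v7
    have w8 := aux_v _ _ _ _ r4 v8
    have m1 := mul_pos hui r1
    have m2 := mul_pos hui r2
    have m3 := mul_pos hui r3
    have m4 := mul_pos hui r4
    have t0 : 0 ≤ (t - x 1) / (x N - x 1) := div_nonneg (by linarith [ht.1]) hT.le
    have t1 : (t - x 1) / (x N - x 1) ≤ 1 := by
      rw [div_le_one hT]; linarith [ht.2]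
    rw [hq i t _ rfl]
    constructor
    · apply aux_lower _ _ _ _ _ _ _ _ hui hv0 t0 t1
      · rw [hU]; linarith
      · rw [hV]; linarith
      · rw [hW]; linarith
      · rw [hZ]; linarith
    · apply aux_upper _ _ _ _ _ _ _ _ hui hv0 t0 t1
      · rw [hU]; linarith
      · rw [hV]; linarith
      · rw [hW]; linarith
      · rw [hZ]; linarith
  have pre : ∀ s ∈ Set.Icc (x 1) (x N), ∃ i, 1 ≤ i ∧ i < N ∧
      ∃ t ∈ Set.Icc (x 1) (x N), L i t = s := by
    intro s hs
    obtain ⟨i, h1, h2, h3, h4⟩ := aux_cover x N s hs.1 (by omega) hs.2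
    have hh : 0 < x (i + 1) - x i := by linarith [hx i h1 h2]
    refine ⟨i, h1, h2, x 1 + (s - x i) / (x (i + 1) - x i) * (x N - x 1), ⟨?_, ?_⟩, ?_⟩
    · have : 0 ≤ (s - x i) / (x (i + 1) - x i) := div_nonneg (by linarith) hh.le
      have := mul_nonneg this hT.le
      linarith
    · have : (s - x i) / (x (i + 1) - x i) ≤ 1 := by
        rw [div_le_one hh]; linarith
      have := mul_le_mul_of_nonneg_right this hT.le
      linarith
    · rw [hL i h1 h2, ha]
      have := hh.ne'
      have := hT.ne'
      field_simp
      ring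
  have hne : (Set.Icc (x 1) (x N)).Nonempty := ⟨x 1, le_rfl, by linarith⟩
  obtain ⟨s, hs, hsM⟩ := isCompact_Icc.exists_isMaxOn hne hΨc
  obtain ⟨r, hr, hrm⟩ := isCompact_Icc.exists_isMinOn hne hΨc
  rw [isMaxOn_iff] at hsM
  rw [isMinOn_iff] at hrm
  obtain ⟨i, i1, i2, ti, hti, ei⟩ := pre s hs
  obtain ⟨j, j1, j2, tj, htj, ej⟩ := pre r hr
  have A1 : Ψ s - δ ≤ -α i * (c - Ψ r) := by
    have e := hΨ i i1 i2 ti hti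
    rw [ei] at e
    have := (key i i1 i2 ti hti).2
    have := mul_le_mul_of_nonpos_left (hrm ti hti) (hα i i1 i2).2.le
    linarith
  have A2 : c - Ψ r ≤ -α j * (Ψ s - δ) := by
    have e := hΨ j j1 j2 tj htj
    rw [ej] at e
    have := (key j j1 j2 tj htj).1
    have := mul_le_mul_of_nonpos_left (hsM tj htj) (hα j j1 j2).2.le
    linarith
  have bi := hα1 i i1 i2
  have bj := hα1 j j1 j2
  have ni := (hα i i1 i2).2
  have nj := (hα j j1 j2).2
  have F1 : Ψ s ≤ δ := by
    by_contra hcon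
    push Not at hcon
    have g1 : -α j * (Ψ s - δ) < Ψ s - δ := by nlinarith
    have g2 : 0 < c - Ψ r := by
      by_contra hh
      push Not at hh
      have := mul_nonneg (neg_nonneg.mpr ni.le) (neg_nonneg.mpr hh)
      linarith
    have g3 : -α i * (c - Ψ r) < c - Ψ r := by nlinarith
    linarith
  have F2 : c ≤ Ψ r := by
    have := mul_nonneg (neg_nonneg.mpr nj.le) (sub_nonneg.mpr F1)
    linarith
  intro t ht
  exact ⟨F2.trans (hrm t ht), (hsM t ht).trans F1⟩
end

section
/- Let {(x_i, y_i, d_i) : i = 1,...,N} be given data with x_1 < ... < x_N lying strictly above the line t(x) = m x + k, i.e. y_i > t_i := m x_i + k for all i. Suppose for each i = 1,...,N−1: 0 ≤ α_i < min{a_i, (y_i − t_i)/(y_1 − t_1), (y_{i+1} − t_{i+1})/(y_N − t_N)}, u_i > 0, and v_i > max{0, v_{9i}, v_{10i}}, where v_{9i} = −u_i[2(y_i − t_i) + (y_i − t_{i+1}) + h_i d_i − α_i{2(y_1 − t_1) + (y_1 − t_N) + (x_N − x_1) d_1}]/(y_i − t_i − α_i(y_1 − t_1)) and v_{10i} = −u_i[(y_{i+1}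 − t_i) + 2(y_{i+1} − t_{i+1}) − h_i d_{i+1} − α_i{(y_N − t_1) + 2(y_N − t_N) − (x_N − x_1) d_N}]/(y_{i+1} − t_{i+1} − α_i(y_N − t_N)). Then the corresponding rational cubic spline fractal interpolation function Ψ satisfies Ψ(x) > m x + k for all x ∈ I = [x_1, x_N]. -/
/-- If the data lies strictly above the line `t(x) = m x + k` and the
scaling factors and shape parameters satisfy the stated restrictions, then the
RCSFIF `Ψ` lies strictly above the line on `I`. -/
theorem stmt_10
    (N : ℕ) (hN : 2 < N)
    (x y d : ℕ → ℝ) (m k : ℝ)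
    (hx : ∀ i, 1 ≤ i → i < N → x i < x (i + 1))
    (tl : ℕ → ℝ) (htl : ∀ i, tl i = m * x i + k)
    (hyt : ∀ i, 1 ≤ i → i ≤ N → tl i < y i)
    (a : ℕ → ℝ) (ha : ∀ i, a i = (x (i + 1) - x i) / (x N - x 1))
    (L : ℕ → ℝ → ℝ)
    (hL : ∀ i, 1 ≤ i → i < N → ∀ t : ℝ, L i t =
      a i * t + (x N * x i - x 1 * x (i + 1)) / (x N - x 1))
    (α u v : ℕ → ℝ)
    (hα : ∀ i, 1 ≤ i → i < N →
      0 ≤ α i ∧ α i < min (a i)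
        (min ((y i - tl i) / (y 1 - tl 1)) ((y (i + 1) - tl (i + 1)) / (y N - tl N))))
    (hu : ∀ i, 1 ≤ i → i < N → 0 < u i)
    (hv : ∀ i, 1 ≤ i → i < N →
      max 0 (max
        (-(u i) * (2 * (y i - tl i) + (y i - tl (i + 1)) + (x (i + 1) - x i) * d i
            - α i * (2 * (y 1 - tl 1) + (y 1 - tl N) + (x N - x 1) * d 1))
          / (y i - tl i - α i * (y 1 - tl 1)))
        (-(u i) * ((y (i + 1) - tl i) + 2 * (y (i + 1) - tl (i + 1))
            - (x (i + 1) - x i) * d (i + 1)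
            - α i * ((y N - tl 1) + 2 * (y N - tl N) - (x N - x 1) * d N))
          / (y (i + 1) - tl (i + 1) - α i * (y N - tl N)))) < v i)
    (U V W Z : ℕ → ℝ)
    (hU : ∀ i, U i = u i * (y i - α i * y 1))
    (hV : ∀ i, V i = (3 * u i + v i) * (y i - α i * y 1)
      + u i * (x (i + 1) - x i) * d i - α i * u i * (x N - x 1) * d 1)
    (hW : ∀ i, W i = (3 * u i + v i) * (y (i + 1) - α i * y N)
      - u i * (x (i + 1) - x i) * d (i + 1) + α i * u i * (x N - x 1) * d N)
    (hZ : ∀ i, Z i = u i * (y (i + 1) - α i * y N))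
    (q : ℕ → ℝ → ℝ)
    (hq : ∀ (i : ℕ) (t θ : ℝ), θ = (t - x 1) / (x N - x 1) →
      q i t = (U i * (1 - θ) ^ 3 + V i * θ * (1 - θ) ^ 2
        + W i * θ ^ 2 * (1 - θ) + Z i * θ ^ 3) / (u i + v i * θ * (1 - θ)))
    (Ψ : ℝ → ℝ)
    (hΨc : ContinuousOn Ψ (Set.Icc (x 1) (x N)))
    (hΨ : ∀ i, 1 ≤ i → i < N → ∀ t ∈ Set.Icc (x 1) (x N),
      Ψ (L i t) = α i * Ψ t + q i t)
    (hΨy : ∀ i, 1 ≤ i → i ≤ N → Ψ (x i) = y i) :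
    ∀ s ∈ Set.Icc (x 1) (x N), m * s + k < Ψ s := by
  have hmono : ∀ i j, 1 ≤ i → i ≤ j → j ≤ N → x i ≤ x j := by
    intro i j hi hij
    induction j, hij using Nat.le_induction with
    | base => intro _; exact le_rfl
    | succ j hj ih =>
      intro hjN
      exact (ih (by omega)).trans (hx j (by omega) (by omega)).le
  have hD : 0 < x N - x 1 := by
    have h1 := hx 1 le_rfl (by omega)
    have h2 := hmono (1 + 1) N (by omega) (by omega) le_rfl
    linarith
  have hloc : ∀ s, x 1 ≤ s → ∀ n, 2 ≤ n → n ≤ N → s ≤ x n →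
      ∃ i, 1 ≤ i ∧ i < N ∧ x i ≤ s ∧ s ≤ x (i + 1) := by
    intro s hs n hn
    induction n, hn using Nat.le_induction with
    | base => intro _ h; exact ⟨1, le_rfl, by omega, hs, h⟩
    | succ n hn ih =>
      intro hnN h
      by_cases h' : s ≤ x n
      · exact ih (by omega) h'
      · exact ⟨n, by omega, by omega, (not_le.mp h').le, h⟩
  have hgc : ContinuousOn (fun s => Ψ s - (m * s + k)) (Set.Icc (x 1) (x N)) :=
    hΨc.sub (by fun_prop)
  obtain ⟨s0, hs0, hmin⟩ := isCompact_Icc.exists_isMinOn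
    ⟨x 1, Set.left_mem_Icc.mpr (by linarith)⟩ hgc
  have hmin' : ∀ s ∈ Set.Icc (x 1) (x N), Ψ s0 - (m * s0 + k) ≤ Ψ s - (m * s + k) :=
    fun s hs => hmin hs
  suffices hpos : 0 < Ψ s0 - (m * s0 + k) by
    intro s hs
    have := hmin' s hs
    linarith
  obtain ⟨i, hi1, hiN, hl, hr⟩ := hloc s0 hs0.1 N (by omega) le_rfl hs0.2
  have hh : 0 < x (i + 1) - x i := by linarith [hx i hi1 hiN]
  obtain ⟨θ, hθ⟩ : ∃ θ, θ = (s0 - x i) / (x (i + 1) - x i) := ⟨_, rfl⟩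
  have hθ0 : 0 ≤ θ := by rw [hθ]; exact div_nonneg (by linarith) hh.le
  have hθ1 : θ ≤ 1 := by rw [hθ, div_le_one hh]; linarith
  have hs0θ : s0 = x i + θ * (x (i + 1) - x i) := by
    rw [hθ]; field_simp; ring
  obtain ⟨t, ht⟩ : ∃ t, t = x 1 + θ * (x N - x 1) := ⟨_, rfl⟩
  have htI : t ∈ Set.Icc (x 1) (x N) := by
    rw [ht]; constructor <;> nlinarith
  have htθ : θ = (t - x 1) / (x N - x 1) := by
    rw [ht]; field_simp; ring
  have hLt : L i t = s0 := by
    rw [hL i hi1 hiN, ha, hs0θ, ht]; field_simp; ring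
  have hfe := hΨ i hi1 hiN t htI
  rw [hLt, hq i t θ htθ] at hfe
  obtain ⟨hα0, hαm⟩ := hα i hi1 hiN
  rw [lt_min_iff, lt_min_iff] at hαm
  obtain ⟨hαa, hα1, hα2⟩ := hαm
  have e1 := hyt 1 le_rfl (by omega)
  have eN := hyt N (by omega) le_rfl
  rw [lt_div_iff₀ (by linarith)] at hα1 hα2
  have hαlt : α i < 1 := by
    refine hαa.trans_le ?_
    rw [ha, div_le_one hD]
    linarith [hmono 1 i le_rfl hi1 hiN.le, hmono (i + 1) N (by omega) (by omega) le_rfl]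
  have hui := hu i hi1 hiN
  have hvi := hv i hi1 hiN
  rw [max_lt_iff, max_lt_iff, div_lt_iff₀ (by linarith), div_lt_iff₀ (by linarith)] at hvi
  obtain ⟨hv0, hv1, hv2⟩ := hvi
  have hden : 0 < u i + v i * θ * (1 - θ) := by
    have : 0 ≤ v i * θ * (1 - θ) :=
      mul_nonneg (mul_nonneg hv0.le hθ0) (by linarith)
    linarith
  obtain ⟨A, hA⟩ : ∃ A, A = tl i - α i * tl 1 := ⟨_, rfl⟩
  obtain ⟨B, hB⟩ : ∃ B, B = tl (i + 1) - α i * tl N := ⟨_, rfl⟩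
  have c0 : 0 < U i - u i * A := by
    have : 0 < u i * (y i - tl i - α i * (y 1 - tl 1)) := mul_pos hui (by linarith)
    rw [hU, hA]; linarith
  have c3 : 0 < Z i - u i * B := by
    have : 0 < u i * (y (i + 1) - tl (i + 1) - α i * (y N - tl N)) :=
      mul_pos hui (by linarith)
    rw [hZ, hB]; linarith
  have c1 : 0 < V i - ((2 * u i + v i) * A + u i * B) := by
    rw [hV, hA, hB]; linarith
  have c2 : 0 < W i - (u i * A + (2 * u i + v i) * B) := by
    rw [hW, hA, hB]; linarith
  have hnum : 0 < (U i - u i * A) * (1 - θ) ^ 3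
      + (V i - ((2 * u i + v i) * A + u i * B)) * (θ * (1 - θ) ^ 2)
      + (W i - (u i * A + (2 * u i + v i) * B)) * (θ ^ 2 * (1 - θ))
      + (Z i - u i * B) * θ ^ 3 := by
    have h1 : 0 ≤ 1 - θ := by linarith
    rcases hθ0.eq_or_lt with h0 | h0
    · rw [← h0]; simpa using c0
    · have := mul_pos c3 (pow_pos h0 3)
      have := mul_nonneg c0.le (pow_nonneg h1 3)
      have := mul_nonneg c1.le (mul_nonneg hθ0 (pow_nonneg h1 2))
      have := mul_nonneg c2.le (mul_nonneg (pow_nonneg hθ0 2) h1)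
      linarith
  have hq' : A * (1 - θ) + B * θ < (U i * (1 - θ) ^ 3 + V i * θ * (1 - θ) ^ 2
        + W i * θ ^ 2 * (1 - θ) + Z i * θ ^ 3) / (u i + v i * θ * (1 - θ)) := by
    rw [lt_div_iff₀ hden]; linarith
  have hline : A * (1 - θ) + B * θ = (m * s0 + k) - α i * (m * t + k) := by
    rw [hA, hB, hs0θ, ht]; simp only [htl]; ring
  have hgt := mul_le_mul_of_nonneg_left (hmin' t htI) hα0
  have : 0 < (1 - α i) * (Ψ s0 - (m * s0 + k)) := by linarith
  exact pos_of_mul_pos_right this (by linarith)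
end

section
/- Under the hypotheses of the above-the-line theorem (0 ≤ α_i < min{a_i, (y_i − t_i)/(y_1 − t_1), (y_{i+1} − t_{i+1})/(y_N − t_N)}, u_i > 0 and v_i > max{0, v_{9i}, v_{10i}}), the four coefficients U_i^* = u_i[y_i − t_i − α_i(y_1 − t_1)], V_i^* = u_i[2(y_i − t_i) + (y_i − t_{i+1}) + h_i d_i − α_i{2(y_1 − t_1) + (y_1 − t_N) + (x_N − x_1) d_1}] + v_i[y_i − t_i − α_i(y_1 − t_1)], W_i^* = u_i[(y_{i+1} − t_i) + 2(y_{i+1} − t_{i+1}) − h_i d_{i+1} − α_i{(y_N − t_1) + 2(y_N − t_N) − (x_N − x_1) d_N}] + v_i[y_{i+1} − t_{i+1} − α_i(y_N − t_N)], Z_i^* = u_i[y_{i+1} − t_{i+1} − α_i(y_N − t_N)] are all positive, and consequently α_i(m x + k)(u_i + v_i θ(1−θ)) + P_i^*(θ) − (m L_i(x) + k)(u_i + v_i θ(1−θ)) = U_i^*(1−θ)^3 + V_i^* θ(1−θ)^2 + W_i^* θ^2(1−θ) + Z_i^* θ^3 > 0 for all θ ∈ [0, 1], where x = x_1 + θ(x_N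 − x_1). -/
/-- Under the above-the-line hypotheses the coefficients
`Uᵢ*, Vᵢ*, Wᵢ*, Zᵢ*` are all positive, and
`αᵢ(mx+k)Qᵢ*(θ) + Pᵢ*(θ) − (m Lᵢ(x)+k)Qᵢ*(θ) = Uᵢ*(1−θ)³ + Vᵢ*θ(1−θ)² + Wᵢ*θ²(1−θ) + Zᵢ*θ³ > 0`
for all `θ ∈ [0,1]`, where `x = x₁ + θ(x_N − x₁)`. -/
theorem stmt_11
    (N : ℕ) (hN : 2 < N)
    (x y d : ℕ → ℝ) (m k : ℝ)
    (hx : ∀ i, 1 ≤ i → i < N → x i < x (i + 1))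
    (tl : ℕ → ℝ) (htl : ∀ i, tl i = m * x i + k)
    (hyt : ∀ i, 1 ≤ i → i ≤ N → tl i < y i)
    (a : ℕ → ℝ) (ha : ∀ i, a i = (x (i + 1) - x i) / (x N - x 1))
    (L : ℕ → ℝ → ℝ)
    (hL : ∀ i, 1 ≤ i → i < N → ∀ t : ℝ, L i t =
      a i * t + (x N * x i - x 1 * x (i + 1)) / (x N - x 1))
    (α u v : ℕ → ℝ)
    (hα : ∀ i, 1 ≤ i → i < N →
      0 ≤ α i ∧ α i < min (a i)
        (min ((y i - tl i) / (y 1 - tl 1)) ((y (i + 1) - tl (i + 1)) / (y N - tl N))))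
    (hu : ∀ i, 1 ≤ i → i < N → 0 < u i)
    (hv : ∀ i, 1 ≤ i → i < N →
      max 0 (max
        (-(u i) * (2 * (y i - tl i) + (y i - tl (i + 1)) + (x (i + 1) - x i) * d i
            - α i * (2 * (y 1 - tl 1) + (y 1 - tl N) + (x N - x 1) * d 1))
          / (y i - tl i - α i * (y 1 - tl 1)))
        (-(u i) * ((y (i + 1) - tl i) + 2 * (y (i + 1) - tl (i + 1))
            - (x (i + 1) - x i) * d (i + 1)
            - α i * ((y N - tl 1) + 2 * (y N - tl N) - (x N - x 1) * d N))
          / (y (i + 1) - tl (i + 1) - α i * (y N - tl N)))) < v i)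
    (U V W Z : ℕ → ℝ)
    (hU : ∀ i, U i = u i * (y i - α i * y 1))
    (hV : ∀ i, V i = (3 * u i + v i) * (y i - α i * y 1)
      + u i * (x (i + 1) - x i) * d i - α i * u i * (x N - x 1) * d 1)
    (hW : ∀ i, W i = (3 * u i + v i) * (y (i + 1) - α i * y N)
      - u i * (x (i + 1) - x i) * d (i + 1) + α i * u i * (x N - x 1) * d N)
    (hZ : ∀ i, Z i = u i * (y (i + 1) - α i * y N))
    (Ustar Vstar Wstar Zstar : ℕ → ℝ)
    (hUstar : ∀ i, Ustar i = u i * (y i - tl i - α i * (y 1 - tl 1)))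
    (hVstar : ∀ i, Vstar i =
      u i * (2 * (y i - tl i) + (y i - tl (i + 1)) + (x (i + 1) - x i) * d i
        - α i * (2 * (y 1 - tl 1) + (y 1 - tl N) + (x N - x 1) * d 1))
      + v i * (y i - tl i - α i * (y 1 - tl 1)))
    (hWstar : ∀ i, Wstar i =
      u i * ((y (i + 1) - tl i) + 2 * (y (i + 1) - tl (i + 1))
        - (x (i + 1) - x i) * d (i + 1)
        - α i * ((y N - tl 1) + 2 * (y N - tl N) - (x N - x 1) * d N))
      + v i * (y (i + 1) - tl (i + 1) - α i * (y N - tl N)))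
    (hZstar : ∀ i, Zstar i = u i * (y (i + 1) - tl (i + 1) - α i * (y N - tl N))) :
    ∀ i, 1 ≤ i → i < N →
      (0 < Ustar i ∧ 0 < Vstar i ∧ 0 < Wstar i ∧ 0 < Zstar i) ∧
      ∀ θ ∈ Set.Icc (0 : ℝ) 1, ∀ s : ℝ, s = x 1 + θ * (x N - x 1) →
        (α i * (m * s + k) * (u i + v i * θ * (1 - θ))
          + (U i * (1 - θ) ^ 3 + V i * θ * (1 - θ) ^ 2
            + W i * θ ^ 2 * (1 - θ) + Z i * θ ^ 3)
          - (m * L i s + k) * (u i + v i * θ * (1 - θ))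
          = Ustar i * (1 - θ) ^ 3 + Vstar i * θ * (1 - θ) ^ 2
            + Wstar i * θ ^ 2 * (1 - θ) + Zstar i * θ ^ 3) ∧
        0 < Ustar i * (1 - θ) ^ 3 + Vstar i * θ * (1 - θ) ^ 2
            + Wstar i * θ ^ 2 * (1 - θ) + Zstar i * θ ^ 3 := by
  have hxN : ∀ n, 2 ≤ n → n ≤ N → x 1 < x n := by
    intro n hn
    induction n, hn using Nat.le_induction with
    | base => intro _; exact hx 1 le_rfl (by omega)
    | succ n hn ih =>
      intro h
      exact (ih (by omega)).trans (hx n (by omega) (by omega))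
  have hD : 0 < x N - x 1 := sub_pos.mpr (hxN N (by omega) le_rfl)
  intro i hi1 hiN
  obtain ⟨_, hα2⟩ := hα i hi1 hiN
  have hui := hu i hi1 hiN
  have hvi := hv i hi1 hiN
  rw [lt_min_iff, lt_min_iff] at hα2
  obtain ⟨_, hb, hc⟩ := hα2
  rw [max_lt_iff, max_lt_iff] at hvi
  obtain ⟨_, hv9, hv10⟩ := hvi
  have hy1 : 0 < y 1 - tl 1 := sub_pos.mpr (hyt 1 le_rfl (by omega))
  have hyN : 0 < y N - tl N := sub_pos.mpr (hyt N (by omega) le_rfl)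
  rw [lt_div_iff₀ hy1] at hb
  rw [lt_div_iff₀ hyN] at hc
  have hA : 0 < y i - tl i - α i * (y 1 - tl 1) := by linarith
  have hB : 0 < y (i + 1) - tl (i + 1) - α i * (y N - tl N) := by linarith
  rw [div_lt_iff₀ hA] at hv9
  rw [div_lt_iff₀ hB] at hv10
  have pU : 0 < Ustar i := by rw [hUstar]; exact mul_pos hui hA
  have pZ : 0 < Zstar i := by rw [hZstar]; exact mul_pos hui hB
  have pV : 0 < Vstar i := by rw [hVstar]; linarith
  have pW : 0 < Wstar i := by rw [hWstar]; linarith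
  refine ⟨⟨pU, pV, pW, pZ⟩, ?_⟩
  rintro θ ⟨h0, h1⟩ s hs
  constructor
  · have hLs : L i s = x i + θ * (x (i + 1) - x i) := by
      rw [hL i hi1 hiN, ha, hs]
      field_simp
      ring
    rw [hLs, hs, hU, hV, hW, hZ, hUstar, hVstar, hWstar, hZstar, htl i, htl (i + 1), htl 1, htl N]
    ring
  · have h1' : 0 ≤ 1 - θ := by linarith
    have q2 : 0 ≤ Vstar i * θ * (1 - θ) ^ 2 := by positivity
    have q3 : 0 ≤ Wstar i * θ ^ 2 * (1 - θ) := by positivity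
    rcases h0.eq_or_lt with h | h
    · subst h
      simpa using pU
    · have q1 : 0 ≤ Ustar i * (1 - θ) ^ 3 := by positivity
      have q4 : 0 < Zstar i * θ ^ 3 := by positivity
      linarith
end

section
/- Let {(x_i, y_i, d_i) : i = 1,...,N} with x_1 < ... < x_N lie above the line t(x) = m x + k, i.e. y_i > t_i := m x_i + k for all i, and let C be the classical C^1 rational cubic spline defined on each [x_i, x_{i+1}] by C(x) = P_i^*(υ)/Q_i^*(υ) with υ = (x − x_i)/h_i, P_i^*(υ) = u_i y_i (1−υ)^3 + [(3u_i + v_i) y_i + u_i h_i d_i] υ(1−υ)^2 + [(3u_i + v_i) y_{i+1} − u_i h_i d_{i+1}] υ^2(1−υ) + u_i y_{i+1} υ^3, Q_i^*(υ) = u_i + v_i υ(1−υ). If u_i > 0 and v_i > max{0, −u_i[2(y_i − t_i) + (y_i − t_{i+1}) + h_i d_i]/(y_i − t_i), −u_i[(y_{i+1} − t_i) + 2(y_{i+1} − t_{i+1}) − h_i d_{i+1}]/(y_{i+1} − t_{i+1})} for every i, then C(x) > m x + k for all x ∈ [x_1, x_N]. -/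
/-- If the data lies strictly above the line `t(x) = m x + k`,
`uᵢ > 0`, and `vᵢ` exceeds the stated maximum, then the classical `C¹` rational
cubic spline `C` lies strictly above the line on `[x₁, x_N]`. -/
theorem stmt_12
    (N : ℕ) (hN : 2 < N)
    (x y d : ℕ → ℝ) (m k : ℝ)
    (hx : ∀ i, 1 ≤ i → i < N → x i < x (i + 1))
    (tl : ℕ → ℝ) (htl : ∀ i, tl i = m * x i + k)
    (hyt : ∀ i, 1 ≤ i → i ≤ N → tl i < y i)
    (u v : ℕ → ℝ)
    (hu : ∀ i, 1 ≤ i → i < N → 0 < u i)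
    (hv : ∀ i, 1 ≤ i → i < N →
      max 0 (max
        (-(u i) * (2 * (y i - tl i) + (y i - tl (i + 1)) + (x (i + 1) - x i) * d i)
          / (y i - tl i))
        (-(u i) * ((y (i + 1) - tl i) + 2 * (y (i + 1) - tl (i + 1))
            - (x (i + 1) - x i) * d (i + 1))
          / (y (i + 1) - tl (i + 1)))) < v i)
    (C : ℝ → ℝ)
    (hC : ∀ (i : ℕ), 1 ≤ i → i < N → ∀ t ∈ Set.Icc (x i) (x (i + 1)),
      ∀ υ : ℝ, υ = (t - x i) / (x (i + 1) - x i) →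
      C t = (u i * y i * (1 - υ) ^ 3
        + ((3 * u i + v i) * y i + u i * (x (i + 1) - x i) * d i) * υ * (1 - υ) ^ 2
        + ((3 * u i + v i) * y (i + 1)
            - u i * (x (i + 1) - x i) * d (i + 1)) * υ ^ 2 * (1 - υ)
        + u i * y (i + 1) * υ ^ 3) / (u i + v i * υ * (1 - υ))) :
    ∀ t ∈ Set.Icc (x 1) (x N), m * t + k < C t := by
  intro t ht
  have key : ∀ n, 2 ≤ n → n ≤ N → t ≤ x n →
      ∃ i, 1 ≤ i ∧ i < N ∧ t ∈ Set.Icc (x i) (x (i + 1)) := by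
    intro n hn
    induction n, hn using Nat.le_induction with
    | base => exact fun _ h => ⟨1, le_refl _, by omega, ht.1, h⟩
    | succ n hn ih =>
      intro h1 h2
      rcases le_total t (x n) with h | h
      · exact ih (by omega) h
      · exact ⟨n, by omega, by omega, h, h2⟩
  obtain ⟨i, h1, h2, hti⟩ := key N (by omega) le_rfl ht.2
  have hh : 0 < x (i + 1) - x i := sub_pos.2 (hx i h1 h2)
  have hU := hu i h1 h2
  have hV := hv i h1 h2
  have hp : 0 < y i - tl i := sub_pos.2 (hyt i h1 (by omega))
  have hq : 0 < y (i + 1) - tl (i + 1) := sub_pos.2 (hyt (i + 1) (by omega) (by omega))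
  rw [max_lt_iff, max_lt_iff, div_lt_iff₀ hp, div_lt_iff₀ hq] at hV
  obtain ⟨hv0, hA, hB⟩ := hV
  obtain ⟨s, hs⟩ : ∃ s, s = (t - x i) / (x (i + 1) - x i) := ⟨_, rfl⟩
  rw [hC i h1 h2 t hti s hs]
  have hs0 : 0 ≤ s := hs ▸ div_nonneg (sub_nonneg.2 hti.1) hh.le
  have hs1 : 0 ≤ 1 - s := by
    rw [sub_nonneg, hs, div_le_one hh]
    linarith [hti.2]
  have hts : t = x i + s * (x (i + 1) - x i) := by
    rw [hs]
    field_simp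
    ring
  have hline : m * t + k = tl i * (1 - s) + tl (i + 1) * s := by
    rw [htl, htl, hts]
    ring
  have hQ : 0 < u i + v i * s * (1 - s) := by positivity
  rw [lt_div_iff₀ hQ, hline]
  have e2 : 0 ≤ (u i * (2 * (y i - tl i) + (y i - tl (i + 1)) + (x (i + 1) - x i) * d i)
      + v i * (y i - tl i)) * (s * (1 - s) ^ 2) :=
    mul_nonneg (by linarith) (by positivity)
  have e3 : 0 ≤ (u i * ((y (i + 1) - tl i) + 2 * (y (i + 1) - tl (i + 1))
      - (x (i + 1) - x i) * d (i + 1)) + v i * (y (i + 1) - tl (i + 1))) * (s ^ 2 * (1 - s)) :=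
    mul_nonneg (by linarith) (by positivity)
  have e1 : 0 < u i * (y i - tl i) * (1 - s) ^ 3 + u i * (y (i + 1) - tl (i + 1)) * s ^ 3 := by
    rcases hs0.eq_or_lt with h | h
    · rw [← h]
      norm_num
      exact mul_pos hU hp
    · positivity
  linear_combination e1 + e2 + e3
end

section
/- Let Ψ be the rational cubic spline fractal interpolation function for the Hermite data {(x_i, y_i, d_i)} with scaling factors α_i (|α_i| ≤ κ a_i, 0 ≤ κ < 1) and shape parameters u_i > 0, v_i ≥ 0, and let C be the classical rational cubic spline obtained from the same data and shape parameters with all scaling factors zero. Then ‖C − Ψ‖_∞ ≤ (|α|_∞ / (s(1 − |α|_∞))) · { |u|_∞ M + (1/4)[(3|u|_∞ + |v|_∞) M + |u|_∞ (h |d|_∞ + (x_N − x_1) max{|d_1|, |d_N|})] }, where M = |y|_∞ + max{|y_1|, |y_N|}, |y|_∞ = max_i |y_i|, |d|_∞ = max_i |d_i|, |u|_∞ = max_i u_i, |v|_∞ = max_i v_i, |α|_∞ = max_i |α_i|, h = max_i h_i, and s = min_i (u_i + v_i/4). -/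
/-- Uniform bound for a single rational cubic Hermite piece. -/
lemma piece_bound (u v yl yr l dl dr θ Y D Un S : ℝ) (hu : 0 < u) (hv : 0 ≤ v)
    (h0 : 0 ≤ θ) (h1 : θ ≤ 1) (hyl : |yl| ≤ Y) (hyr : |yr| ≤ Y) (hl : 0 ≤ l)
    (hdl : |dl| ≤ D) (hdr : |dr| ≤ D) (hUn : u ≤ Un) (hS : 0 < S) (hSu : S ≤ u + v / 4) :
    |(u * yl * (1 - θ) ^ 3 + ((3 * u + v) * yl + u * l * dl) * θ * (1 - θ) ^ 2
      + ((3 * u + v) * yr - u * l * dr) * θ ^ 2 * (1 - θ) + u * yr * θ ^ 3)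
      / (u + v * θ * (1 - θ))| ≤ Y + Un / (4 * S) * (l * D) := by
  have h2 : 0 ≤ 1 - θ := by linarith
  have hw : 0 ≤ θ * (1 - θ) := mul_nonneg h0 h2
  have hw4 : θ * (1 - θ) ≤ 1 / 4 := by nlinarith [sq_nonneg (θ - 1 / 2)]
  have hden : 0 < u + v * θ * (1 - θ) := by
    have := mul_nonneg hv hw
    nlinarith
  have hD : 0 ≤ D := (abs_nonneg _).trans hdl
  obtain ⟨a1, a2⟩ := abs_le.mp hyl
  obtain ⟨b1, b2⟩ := abs_le.mp hyr
  obtain ⟨c1, c2⟩ := abs_le.mp hdl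
  obtain ⟨e1, e2⟩ := abs_le.mp hdr
  have hP : 0 ≤ (1 - θ) ^ 2 * (u + (2 * u + v) * θ) := by positivity
  have hR : 0 ≤ θ ^ 2 * (u + (2 * u + v) * (1 - θ)) := by positivity
  have hp : 0 ≤ u * l * (θ * (1 - θ) ^ 2) := by positivity
  have hr : 0 ≤ u * l * (θ ^ 2 * (1 - θ)) := by positivity
  have key : u * (θ * (1 - θ)) ≤ Un / (4 * S) * (u + v * θ * (1 - θ)) := by
    rw [div_mul_eq_mul_div, le_div_iff₀ (by positivity)]
    have k1 : u * (θ * (1 - θ)) * (4 * S) ≤ u * (θ * (1 - θ)) * (4 * u + v) := by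
      apply mul_le_mul_of_nonneg_left (by linarith) (by positivity)
    have k2 : u * ((θ * (1 - θ)) * (4 * u + v)) ≤ u * (u + v * θ * (1 - θ)) := by
      apply mul_le_mul_of_nonneg_left _ hu.le
      nlinarith
    have k3 := mul_le_mul_of_nonneg_right hUn hden.le
    linarith
  have key2 := mul_le_mul_of_nonneg_right key (mul_nonneg hl hD)
  rw [abs_div, abs_of_pos hden, div_le_iff₀ hden, abs_le]
  have p1 := mul_le_mul_of_nonneg_right a1 hP
  have p2 := mul_le_mul_of_nonneg_right a2 hP
  have p3 := mul_le_mul_of_nonneg_right b1 hR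
  have p4 := mul_le_mul_of_nonneg_right b2 hR
  have p5 := mul_le_mul_of_nonneg_right c1 hp
  have p6 := mul_le_mul_of_nonneg_right c2 hp
  have p7 := mul_le_mul_of_nonneg_right e1 hr
  have p8 := mul_le_mul_of_nonneg_right e2 hr
  constructor <;> linarith

/-- Every point of `[x 1, x n]` lies in a subinterval. -/
lemma exists_piece (x : ℕ → ℝ) (t : ℝ) (n : ℕ) (hn : 2 ≤ n) (h1 : x 1 ≤ t) (h2 : t ≤ x n) :
    ∃ i, 1 ≤ i ∧ i < n ∧ x i ≤ t ∧ t ≤ x (i + 1) := by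
  induction n, hn using Nat.le_induction with
  | base => exact ⟨1, le_refl _, by norm_num, h1, h2⟩
  | succ n hn ih =>
    by_cases h : t ≤ x n
    · obtain ⟨i, a, b, c⟩ := ih h
      exact ⟨i, a, by omega, c⟩
    · exact ⟨n, by omega, by omega, (not_le.mp h).le, h2⟩

lemma mono_knots (x : ℕ → ℝ) (N : ℕ) (hx : ∀ i, 1 ≤ i → i < N → x i < x (i + 1))
    (i j : ℕ) (hi : 1 ≤ i) (hij : i ≤ j) (hj : j ≤ N) : x i ≤ x j := by
  induction j, hij using Nat.le_induction with
  | base => exact le_refl _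
  | succ n hn ih => exact (ih (by omega)).trans (hx n (by omega) (by omega)).le

/-- Uniform bound for the distance between the RCSFIF `Ψ` and the
classical rational cubic spline `C` obtained with zero scaling factors. -/
theorem stmt_13
    (N : ℕ) (hN : 2 < N)
    (x y d : ℕ → ℝ)
    (hx : ∀ i, 1 ≤ i → i < N → x i < x (i + 1))
    (a : ℕ → ℝ) (ha : ∀ i, a i = (x (i + 1) - x i) / (x N - x 1))
    (L : ℕ → ℝ → ℝ)
    (hL : ∀ i, 1 ≤ i → i < N → ∀ t : ℝ, L i t =
      a i * t + (x N * x i - x 1 * x (i + 1)) / (x N - x 1))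
    (α u v : ℕ → ℝ) (κ : ℝ)
    (hκ0 : 0 ≤ κ) (hκ1 : κ < 1)
    (hα : ∀ i, 1 ≤ i → i < N → |α i| ≤ κ * a i)
    (hu : ∀ i, 1 ≤ i → i < N → 0 < u i)
    (hv : ∀ i, 1 ≤ i → i < N → 0 ≤ v i)
    (U V W Z : ℕ → ℝ)
    (hU : ∀ i, U i = u i * (y i - α i * y 1))
    (hV : ∀ i, V i = (3 * u i + v i) * (y i - α i * y 1)
      + u i * (x (i + 1) - x i) * d i - α i * u i * (x N - x 1) * d 1)
    (hW : ∀ i, W i = (3 * u i + v i) * (y (i + 1) - α i * y N)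
      - u i * (x (i + 1) - x i) * d (i + 1) + α i * u i * (x N - x 1) * d N)
    (hZ : ∀ i, Z i = u i * (y (i + 1) - α i * y N))
    (q : ℕ → ℝ → ℝ)
    (hq : ∀ (i : ℕ) (t θ : ℝ), θ = (t - x 1) / (x N - x 1) →
      q i t = (U i * (1 - θ) ^ 3 + V i * θ * (1 - θ) ^ 2
        + W i * θ ^ 2 * (1 - θ) + Z i * θ ^ 3) / (u i + v i * θ * (1 - θ)))
    (Ψ : ℝ → ℝ)
    (hΨc : ContinuousOn Ψ (Set.Icc (x 1) (x N)))
    (hΨ : ∀ i, 1 ≤ i → i < N → ∀ t ∈ Set.Icc (x 1) (x N),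
      Ψ (L i t) = α i * Ψ t + q i t)
    (C : ℝ → ℝ)
    (hC : ∀ (i : ℕ), 1 ≤ i → i < N → ∀ t ∈ Set.Icc (x i) (x (i + 1)),
      ∀ υ : ℝ, υ = (t - x i) / (x (i + 1) - x i) →
      C t = (u i * y i * (1 - υ) ^ 3
        + ((3 * u i + v i) * y i + u i * (x (i + 1) - x i) * d i) * υ * (1 - υ) ^ 2
        + ((3 * u i + v i) * y (i + 1)
            - u i * (x (i + 1) - x i) * d (i + 1)) * υ ^ 2 * (1 - υ)
        + u i * y (i + 1) * υ ^ 3) / (u i + v i * υ * (1 - υ)))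
    (Ynorm Dnorm Unorm Vnorm Anorm H S M : ℝ)
    (hYn : IsGreatest {z : ℝ | ∃ i, 1 ≤ i ∧ i ≤ N ∧ z = |y i|} Ynorm)
    (hDn : IsGreatest {z : ℝ | ∃ i, 1 ≤ i ∧ i ≤ N ∧ z = |d i|} Dnorm)
    (hUn : IsGreatest {z : ℝ | ∃ i, 1 ≤ i ∧ i < N ∧ z = u i} Unorm)
    (hVn : IsGreatest {z : ℝ | ∃ i, 1 ≤ i ∧ i < N ∧ z = v i} Vnorm)
    (hAn : IsGreatest {z : ℝ | ∃ i, 1 ≤ i ∧ i < N ∧ z = |α i|} Anorm)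
    (hH : IsGreatest {z : ℝ | ∃ i, 1 ≤ i ∧ i < N ∧ z = x (i + 1) - x i} H)
    (hS : IsLeast {z : ℝ | ∃ i, 1 ≤ i ∧ i < N ∧ z = u i + v i / 4} S)
    (hM : M = Ynorm + max |y 1| |y N|) :
    ∀ t ∈ Set.Icc (x 1) (x N),
      |C t - Ψ t| ≤ (Anorm / (S * (1 - Anorm))) *
        (Unorm * M + (1 / 4) * ((3 * Unorm + Vnorm) * M
          + Unorm * (H * Dnorm + (x N - x 1) * max |d 1| |d N|))) := by
  have hlen : 0 < x N - x 1 := by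
    have h1 := hx 1 (by omega) (by omega)
    have h2 := mono_knots x N hx 2 N (by omega) (by omega) (by omega)
    norm_num at h1
    linarith
  have hYi : ∀ i, 1 ≤ i → i ≤ N → |y i| ≤ Ynorm := fun i h1 h2 => hYn.2 ⟨i, h1, h2, rfl⟩
  have hDi : ∀ i, 1 ≤ i → i ≤ N → |d i| ≤ Dnorm := fun i h1 h2 => hDn.2 ⟨i, h1, h2, rfl⟩
  have hUi : ∀ i, 1 ≤ i → i < N → u i ≤ Unorm := fun i h1 h2 => hUn.2 ⟨i, h1, h2, rfl⟩
  have hVi : ∀ i, 1 ≤ i → i < N → v i ≤ Vnorm := fun i h1 h2 => hVn.2 ⟨i, h1, h2, rfl⟩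
  have hAi : ∀ i, 1 ≤ i → i < N → |α i| ≤ Anorm := fun i h1 h2 => hAn.2 ⟨i, h1, h2, rfl⟩
  have hHi : ∀ i, 1 ≤ i → i < N → x (i + 1) - x i ≤ H := fun i h1 h2 => hH.2 ⟨i, h1, h2, rfl⟩
  have hSi : ∀ i, 1 ≤ i → i < N → S ≤ u i + v i / 4 := fun i h1 h2 => hS.2 ⟨i, h1, h2, rfl⟩
  have hS0 : 0 < S := by
    obtain ⟨i, h1, h2, h3⟩ := hS.1
    have := hu i h1 h2
    have := hv i h1 h2
    rw [h3]; linarith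
  have hU0 : 0 < Unorm := (hu 1 (by omega) (by omega)).trans_le (hUi 1 (by omega) (by omega))
  have hA0 : 0 ≤ Anorm := (abs_nonneg _).trans (hAi 1 (by omega) (by omega))
  have hD0 : 0 ≤ Dnorm := (abs_nonneg _).trans (hDi 1 (by omega) (by omega))
  have hY0 : 0 ≤ Ynorm := (abs_nonneg _).trans (hYi 1 (by omega) (by omega))
  have hA1 : Anorm < 1 := by
    obtain ⟨i, h1, h2, h3⟩ := hAn.1
    have ha1 : a i ≤ 1 := by
      rw [ha, div_le_one hlen]
      have := mono_knots x N hx 1 i (by omega) (by omega) (by omega)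
      have := mono_knots x N hx (i + 1) N (by omega) (by omega) (by omega)
      linarith
    have := hα i h1 h2
    have := mul_le_mul_of_nonneg_left ha1 hκ0
    rw [h3]; linarith
  have hM0 : 0 ≤ M := by
    rw [hM]
    have : 0 ≤ max |y 1| |y N| := (abs_nonneg _).trans (le_max_left _ _)
    linarith
  -- bound for the classical spline
  have hCb : ∀ t ∈ Set.Icc (x 1) (x N), |C t| ≤ Ynorm + Unorm / (4 * S) * (H * Dnorm) := by
    rintro t ⟨ht1, ht2⟩
    obtain ⟨i, h1, h2, h3, h4⟩ := exists_piece x t N (by omega) ht1 ht2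
    have hh := hx i h1 h2
    have hh0 : 0 < x (i + 1) - x i := by linarith
    rw [hC i h1 h2 t ⟨h3, h4⟩ _ rfl]
    refine (piece_bound (u i) (v i) (y i) (y (i + 1)) (x (i + 1) - x i) (d i) (d (i + 1))
      ((t - x i) / (x (i + 1) - x i)) Ynorm Dnorm Unorm S (hu i h1 h2) (hv i h1 h2)
      (div_nonneg (by linarith) hh0.le) ((div_le_one hh0).mpr (by linarith))
      (hYi i h1 h2.le) (hYi (i + 1) (by omega) h2) hh0.le
      (hDi i h1 h2.le) (hDi (i + 1) (by omega) h2) (hUi i h1 h2) hS0 (hSi i h1 h2)).trans ?_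
    have := hHi i h1 h2
    gcongr
  set K : ℝ := M + Unorm / (4 * S) * (H * Dnorm + (x N - x 1) * max |d 1| |d N|) with hK
  -- the contraction step
  have step : ∀ E : ℝ, (∀ t ∈ Set.Icc (x 1) (x N), |C t - Ψ t| ≤ E) →
      ∀ t ∈ Set.Icc (x 1) (x N), |C t - Ψ t| ≤ Anorm * (E + K) := by
    rintro E hE t ⟨ht1, ht2⟩
    obtain ⟨i, h1, h2, h3, h4⟩ := exists_piece x t N (by omega) ht1 ht2
    have hh := hx i h1 h2
    have hh0 : 0 < x (i + 1) - x i := by linarith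
    obtain ⟨θ, hθ⟩ : ∃ θ, θ = (t - x i) / (x (i + 1) - x i) := ⟨_, rfl⟩
    have hθ0 : 0 ≤ θ := by rw [hθ]; exact div_nonneg (by linarith) hh0.le
    have hθ1 : θ ≤ 1 := by rw [hθ, div_le_one hh0]; linarith
    have htθ : t = x i + θ * (x (i + 1) - x i) := by
      rw [hθ]; field_simp; ring
    obtain ⟨r, hr⟩ : ∃ r, r = x 1 + θ * (x N - x 1) := ⟨_, rfl⟩
    have hrI : r ∈ Set.Icc (x 1) (x N) := by
      constructor
      · nlinarith
      · nlinarith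
    have hrθ : θ = (r - x 1) / (x N - x 1) := by
      rw [hr]; field_simp; ring
    have hLr : L i r = t := by
      rw [hL i h1 h2, ha, htθ, hr]; field_simp; ring
    have hΨt := hΨ i h1 h2 r hrI
    rw [hLr, hq i r θ hrθ, hU, hV, hW, hZ] at hΨt
    have hCt := hC i h1 h2 t ⟨h3, h4⟩ θ hθ
    have hB := piece_bound (u i) (v i) (y 1) (y N) (x N - x 1) (d 1) (d N) θ
      (max |y 1| |y N|) (max |d 1| |d N|) Unorm S (hu i h1 h2) (hv i h1 h2) hθ0 hθ1
      (le_max_left _ _) (le_max_right _ _) hlen.le (le_max_left _ _) (le_max_right _ _)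
      (hUi i h1 h2) hS0 (hSi i h1 h2)
    set B : ℝ := (u i * y 1 * (1 - θ) ^ 3
      + ((3 * u i + v i) * y 1 + u i * (x N - x 1) * d 1) * θ * (1 - θ) ^ 2
      + ((3 * u i + v i) * y N - u i * (x N - x 1) * d N) * θ ^ 2 * (1 - θ)
      + u i * y N * θ ^ 3) / (u i + v i * θ * (1 - θ)) with hBdef
    have heq : C t - Ψ t = α i * ((C r - Ψ r) + (B - C r)) := by
      rw [hCt, hΨt, hBdef]; ring
    rw [heq, abs_mul]
    have e1 := hE r hrI
    have e2 := hCb r hrI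
    have e3 : |(C r - Ψ r) + (B - C r)| ≤ E + K := by
      have t1 := abs_add_le (C r - Ψ r) (B - C r)
      have t2 := abs_sub B (C r)
      rw [hK, hM]
      linarith
    exact mul_le_mul (hAi i h1 h2) e3 (abs_nonneg _) hA0
  -- boundedness
  obtain ⟨P, hP⟩ := isCompact_Icc.exists_bound_of_continuousOn hΨc
  have hbdd : BddAbove ((fun t => |C t - Ψ t|) '' Set.Icc (x 1) (x N)) := by
    refine ⟨Ynorm + Unorm / (4 * S) * (H * Dnorm) + P, ?_⟩
    rintro _ ⟨t, ht, rfl⟩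
    have h1 := hCb t ht
    have h2 := hP t ht
    rw [Real.norm_eq_abs] at h2
    have h3 := abs_sub (C t) (Ψ t)
    simp only
    linarith
  obtain ⟨E, hEdef⟩ : ∃ E, E = sSup ((fun t => |C t - Ψ t|) '' Set.Icc (x 1) (x N)) := ⟨_, rfl⟩
  have hE : ∀ t ∈ Set.Icc (x 1) (x N), |C t - Ψ t| ≤ E := by
    intro t ht
    rw [hEdef]
    exact le_csSup hbdd ⟨t, ht, rfl⟩
  have hE2 : E ≤ Anorm * (E + K) := by
    rw [hEdef]
    apply csSup_le
    · exact ⟨_, x 1, ⟨le_refl _, by linarith⟩, rfl⟩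
    · rintro _ ⟨t, ht, rfl⟩
      rw [← hEdef]
      exact step E hE t ht
  have h1A : 0 < 1 - Anorm := by linarith
  have hE3 : E ≤ Anorm * K / (1 - Anorm) := by
    rw [le_div_iff₀ h1A]; linarith
  have hKS : K ≤ (Unorm * M + (1 / 4) * ((3 * Unorm + Vnorm) * M
          + Unorm * (H * Dnorm + (x N - x 1) * max |d 1| |d N|))) / S := by
    rw [le_div_iff₀ hS0, hK]
    have hSUV : S ≤ Unorm + Vnorm / 4 := by
      have a1 := hSi 1 (by omega) (by omega)
      have a2 := hUi 1 (by omega) (by omega)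
      have a3 := hVi 1 (by omega) (by omega)
      linarith
    have m1 := mul_le_mul_of_nonneg_right hSUV hM0
    have m2 := mul_nonneg hU0.le hM0
    have m3 : Unorm / (4 * S) * (H * Dnorm + (x N - x 1) * max |d 1| |d N|) * S
        = Unorm * (H * Dnorm + (x N - x 1) * max |d 1| |d N|) / 4 := by
      field_simp
    rw [add_mul, m3]
    linarith
  intro t ht
  calc |C t - Ψ t| ≤ E := hE t ht
    _ ≤ Anorm * K / (1 - Anorm) := hE3
    _ ≤ Anorm * ((Unorm * M + (1 / 4) * ((3 * Unorm + Vnorm) * M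
          + Unorm * (H * Dnorm + (x N - x 1) * max |d 1| |d N|))) / S) / (1 - Anorm) := by
        gcongr
    _ = _ := by field_simp
end
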